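/- There is no Diophantine m-tuple with m ≥ 43 in the ring of integers of any imaginary quadratic number field. That is, if S ⊆ O_K is a finite set of nonzero elements such that for all distinct u, v ∈ S the element uv + 1 is a square in O_K, then |S| ≤ 42. -/

import Mathlib

open NumberField

/-!
The ring of integers embeds in `ℂ` as a subring in which every nonzero element has modulus at
least `1`, and two opposite gap principles limit how many elements a Diophantine set can have.

Lower gap. If `ab + 1 = r²`, `ac + 1 = s²` and `bc + 1 = t²`, then `m ± 2rst`, with
`m = a + b + c + 2abc`, are ring elements with product `(c - a - b)² - 4(ab + 1)`. If the product is
nonzero both factors have modulus at least `1`, which forces `|c| ≫ |ab|`; the largest elements of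
a quadruple leave no room for the exceptional triples. Hence the moduli of the elements eventually
grow at least as fast as the exponentials of the Fibonacci numbers.

Upper gap. If `ac + 1`, `bc + 1`, `ad + 1` and `bd + 1` are squares and `cd + 1 = z²`, then
`√(1 + a/T)` and `√(1 + b/T)`, `T = abc`, are approximated to order `|z|⁻²` by fractions with
numerators in the ring and common denominator `abz`. For `i < 3` the residues of
`ζ^i (ζ + T)^(k + 1/2) / (ζ(ζ - a)(ζ - b))^(k + 1)` give independent linear forms in `1`,
`√(1 + a/T)`, `√(1 + b/T)` which are small and whose coefficients are nearly integral. Evaluated at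
such an approximation they would produce nonzero ring elements of modulus less than `1`, unless
`|z| ≤ |T|⁵`. The two gaps are incompatible for `24` elements of modulus at least `4`.

The elements of modulus less than `4` are rational integers, or they lie in one of finitely many
rings `ℤ[ω]`. There they can be coloured with `17` colours such that `uv + 1` is never a square for
distinct nonzero `u`, `v` of the same colour.
-/

section Residues

open Polynomial Lagrange

variable {F : Type*} [Field F]

/-- The expansion of a polynomial in powers of `X - a`, as a power series in the new variable. -/
noncomputable def taylorSeries (a : F) : F[X] →ₐ[F] PowerSeries F :=
  aeval (PowerSeries.X + PowerSeries.C a)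

lemma taylorSeries_X (a : F) : taylorSeries a X = PowerSeries.X + PowerSeries.C a :=
  aeval_X _

lemma taylorSeries_C (a c : F) : taylorSeries a (C c) = PowerSeries.C c := by
  rw [taylorSeries, aeval_C, PowerSeries.algebraMap_apply, Algebra.algebraMap_self,
    RingHom.id_apply]

lemma taylorSeries_X_sub_C (a b : F) :
    taylorSeries a (X - C b) = PowerSeries.X + PowerSeries.C (a - b) := by
  rw [map_sub, taylorSeries_X, taylorSeries_C, map_sub, add_sub_assoc]

lemma taylorSeries_eq_coe_taylor (a : F) (N : F[X]) : taylorSeries a N = (taylor a N : F[X]) := by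
  have : taylorSeries a = (coeToPowerSeries.algHom F).comp (taylorAlgHom a) :=
    algHom_ext (by simp [taylorSeries_X])
  simp [this]

lemma derivative_taylorSeries (a : F) (N : F[X]) :
    PowerSeries.derivative F (taylorSeries a N) = taylorSeries a (derivative N) := by
  simp [taylorSeries, Derivation.map_aeval]

lemma constantCoeff_taylorSeries (a : F) (N : F[X]) :
    PowerSeries.constantCoeff (taylorSeries a N) = N.eval a := by
  simp [taylorSeries_eq_coe_taylor, constantCoeff_coe]

lemma coeff_taylorSeries_of_natDegree_le {N : F[X]} {k : ℕ} (hN : N.natDegree ≤ k) (a : F) :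
    PowerSeries.coeff k (taylorSeries a N) = N.coeff k := by
  rw [taylorSeries_eq_coe_taylor, coeff_coe]
  obtain rfl | hlt := hN.eq_or_lt
  · exact coeff_taylor_natDegree a N
  · rw [coeff_eq_zero_of_natDegree_lt hlt, coeff_eq_zero_of_natDegree_lt (by simpa using hlt)]

lemma coeff_X_mul_derivative_sub {R : Type*} [CommRing R] (W : PowerSeries R) (k : ℕ) :
    PowerSeries.coeff k (PowerSeries.X * PowerSeries.derivative R W - k • W) = 0 := by
  cases k with
  | zero => simp
  | succ k =>
    rw [map_sub, PowerSeries.coeff_succ_X_mul, PowerSeries.coeff_derivative, map_nsmul,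
      nsmul_eq_mul, mul_comm, Nat.cast_succ, sub_self]

/-- The derivative of the Laurent series `g / (X * B) ^ k` has no residue. -/
lemma coeff_derivative_div_eq_zero {B : PowerSeries F} (hB : B * B⁻¹ = 1) (g : PowerSeries F)
    (k : ℕ) :
    PowerSeries.coeff k ((PowerSeries.X * B * PowerSeries.derivative F g -
      k • (g * PowerSeries.derivative F (PowerSeries.X * B))) * B⁻¹ ^ (k + 1)) = 0 := by
  rw [← coeff_X_mul_derivative_sub (g * B⁻¹ ^ k) k]
  congr 1
  have hpow : PowerSeries.derivative F (B⁻¹ ^ k) =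
      -(k • (B⁻¹ ^ (k + 1) * PowerSeries.derivative F B)) := by
    rw [PowerSeries.derivative_pow, PowerSeries.derivative_inv']
    cases k with
    | zero => simp
    | succ n => simp only [Nat.add_sub_cancel, nsmul_eq_mul]; ring
  simp only [Derivation.leibniz, hpow, smul_eq_mul, PowerSeries.derivative_X, nsmul_eq_mul]
  linear_combination (B⁻¹ ^ k * (PowerSeries.X * PowerSeries.derivative F g - k * g)) * hB

/-- The numerator of the derivative of `(z + T) ^ α R(z) / ∏ b ∈ s, (z - b) ^ k`. -/
noncomputable def exactNumerator (s : Finset F) (k : ℕ) (T α : F) (R : F[X]) : F[X] :=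
  C α * (R * nodal s id) + (X + C T) *
    (nodal s id * derivative R - k • (R * derivative (nodal s id)))

lemma linearMap_eq_zero_of_natDegree_le {M : Type*} [AddCommGroup M] [Module F M]
    {l : F[X] →ₗ[F] M} {n : ℕ} {E : ℕ → F[X]}
    (hl : ∀ i < n, l (X ^ i) = 0) (hE : ∀ r, l (E r) = 0)
    (hdeg : ∀ r, (E r).natDegree ≤ r + n) (hlead : ∀ r, (E r).coeff (r + n) ≠ 0) : l = 0 := by
  have hpow (m : ℕ) : l (X ^ m) = 0 := by
    induction m using Nat.strong_induction_on with
    | _ m ih =>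
      obtain hm | hm := lt_or_ge m n
      · exact hl m hm
      obtain ⟨r, rfl⟩ := Nat.exists_eq_add_of_le' hm
      have hsum := hE r
      rw [as_sum_range_C_mul_X_pow' (E r) (Nat.lt_succ_of_le (hdeg r)), map_sum,
        Finset.sum_range_succ, Finset.sum_eq_zero, zero_add, C_mul', map_smul] at hsum
      · exact (smul_eq_zero.1 hsum).resolve_left (hlead r)
      · intro i hi
        rw [C_mul', map_smul, ih i (Finset.mem_range.1 hi), smul_zero]
  refine lhom_ext' fun m => LinearMap.ext_ring ?_
  simpa [← X_pow_eq_monomial] using hpow m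

lemma coeff_exactNumerator_X_pow (s : Finset F) (k : ℕ) (T α : F) (r j : ℕ) :
    (exactNumerator s k T α (X ^ r)).coeff (r + j) =
      (α + r - k * j) * (nodal s id).coeff j +
        T * (r - k * (j + 1 : ℕ)) * (nodal s id).coeff (j + 1) := by
  have hX : X * derivative (X ^ r : F[X]) = (r : F[X]) * X ^ r := by
    cases r with
    | zero => simp
    | succ r => simp; ring
  have hmul : X * exactNumerator s k T α (X ^ r) = X ^ r * (C α * (X * nodal s id) +
      (X + C T) * (C (r : F) * nodal s id - C (k : F) * (X * derivative (nodal s id)))) := by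
    simp only [exactNumerator, nsmul_eq_mul, map_natCast]
    linear_combination (X + C T) * nodal s id * hX
  have hcoeff (j : ℕ) : (X * derivative (nodal s id)).coeff j = j * (nodal s id).coeff j := by
    cases j with
    | zero => simp
    | succ j => simp [coeff_derivative, mul_comm]
  rw [← coeff_X_mul, hmul, add_assoc, coeff_X_pow_mul', if_pos (by lia), Nat.add_sub_cancel_left]
  simp only [add_mul, coeff_add, coeff_sub, coeff_C_mul, coeff_X_mul, hcoeff]
  ring

lemma coeff_exactNumerator_X_pow_add_card (s : Finset F) (k : ℕ) (T α : F) (r : ℕ) :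
    (exactNumerator s k T α (X ^ r)).coeff (r + s.card) = α + r - k * s.card := by
  have hlead := (nodal_monic (s := s) (v := id)).coeff_natDegree
  rw [natDegree_nodal] at hlead
  rw [coeff_exactNumerator_X_pow, hlead,
    coeff_eq_zero_of_natDegree_lt (natDegree_nodal.trans_lt (Nat.lt_succ_self _))]
  ring

lemma natDegree_exactNumerator_X_pow_le (s : Finset F) (k : ℕ) (T α : F) (r : ℕ) :
    (exactNumerator s k T α (X ^ r)).natDegree ≤ r + s.card := by
  refine natDegree_le_iff_coeff_eq_zero.2 fun m hm => ?_
  obtain ⟨j, rfl⟩ := Nat.exists_eq_add_of_le (show r ≤ m by lia)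
  have hj (i : ℕ) (hi : j ≤ i) : (nodal s id).coeff i = 0 :=
    coeff_eq_zero_of_natDegree_lt (by rw [natDegree_nodal]; lia)
  rw [coeff_exactNumerator_X_pow, hj j le_rfl, hj (j + 1) (Nat.le_succ j), mul_zero, mul_zero,
    add_zero]

variable [DecidableEq F] {s : Finset F} {a : F}

/-- The expansion at `a` of `∏ b ∈ s \ {a}, (X - b)`. -/
noncomputable def cofactorSeries (s : Finset F) (a : F) : PowerSeries F :=
  taylorSeries a (nodal (s.erase a) id)

lemma taylorSeries_nodal (ha : a ∈ s) :
    taylorSeries a (nodal s id) = PowerSeries.X * cofactorSeries s a := by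
  rw [nodal_eq_mul_nodal_erase ha, map_mul, id, taylorSeries_X_sub_C, sub_self, map_zero, add_zero,
    cofactorSeries]

lemma cofactorSeries_mul_inv (s : Finset F) (a : F) :
    cofactorSeries s a * (cofactorSeries s a)⁻¹ = 1 := by
  refine PowerSeries.mul_inv_cancel _ ?_
  rw [cofactorSeries, constantCoeff_taylorSeries]
  exact eval_nodal_not_at_node fun b hb => (Finset.ne_of_mem_erase hb).symm

/-- The coefficient of `t ^ k` in `G(t) N(a + t) / ∏ b ∈ s \ {a}, (a + t - b) ^ (k + 1)`, i.e. the
residue at `z = a` of `G(z - a) N(z) / ∏ b ∈ s, (z - b) ^ (k + 1)` when `a ∈ s`, as a linear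
functional of `N`. -/
noncomputable def weightedResidue (s : Finset F) (k : ℕ) (a : F) (G : PowerSeries F) :
    F[X] →ₗ[F] F :=
  PowerSeries.coeff k ∘ₗ LinearMap.mulLeft F (G * (cofactorSeries s a)⁻¹ ^ (k + 1)) ∘ₗ
    (taylorSeries a).toLinearMap

lemma weightedResidue_apply (s : Finset F) (k : ℕ) (a : F) (G : PowerSeries F) (N : F[X]) :
    weightedResidue s k a G N =
      PowerSeries.coeff k (G * (cofactorSeries s a)⁻¹ ^ (k + 1) * taylorSeries a N) := rfl

lemma weightedResidue_mul_nodal_erase_pow (s : Finset F) (k : ℕ) (a : F) (G : PowerSeries F)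
    (N : F[X]) : weightedResidue s k a G (N * nodal (s.erase a) id ^ (k + 1)) =
      PowerSeries.coeff k (G * taylorSeries a N) := by
  rw [weightedResidue_apply, map_mul (taylorSeries a), map_pow, ← cofactorSeries, mul_mul_mul_comm,
    ← mul_pow, mul_comm _⁻¹, cofactorSeries_mul_inv, one_pow, mul_one]

lemma weightedResidue_eq_zero_of_pow_dvd {k : ℕ} (G : PowerSeries F) {N : F[X]}
    (hN : (X - C a) ^ (k + 1) ∣ N) : weightedResidue s k a G N = 0 := by
  obtain ⟨M, rfl⟩ := hN
  rw [weightedResidue_apply, map_mul (taylorSeries a), map_pow, taylorSeries_X_sub_C, sub_self,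
    map_zero, add_zero, mul_left_comm, PowerSeries.coeff_X_pow_mul', if_neg (by lia)]

lemma natDegree_nodal_erase_pow_add (ha : a ∈ s) (m : ℕ) :
    (nodal (s.erase a) id ^ m).natDegree + m = s.card * m := by
  rw [nodal_monic.natDegree_pow, natDegree_nodal, mul_comm, ← Nat.succ_mul, Nat.succ_eq_add_one,
    Finset.card_erase_add_one ha]

lemma exists_eq_sum_mul_nodal_erase_pow {k : ℕ} {N : F[X]}
    (hN : N.natDegree < s.card * (k + 1)) : ∃ r : F → F[X], (∀ a ∈ s, (r a).natDegree ≤ k) ∧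
      N = ∑ a ∈ s, r a * nodal (s.erase a) id ^ (k + 1) := by
  have hmonic : ∀ a ∈ s, ((X - C a : F[X]) ^ (k + 1)).Monic := fun a _ => (monic_X_sub_C a).pow _
  have hcoprime : (s : Set F).Pairwise fun a b =>
      IsCoprime ((X - C a : F[X]) ^ (k + 1)) ((X - C b) ^ (k + 1)) := fun a _ b _ hab =>
    (isCoprime_X_sub_C_of_isUnit_sub (sub_ne_zero.2 hab).isUnit).pow
  obtain ⟨q, r, hr, hqr⟩ := eq_quo_mul_prod_add_sum_rem_mul_prod N hmonic hcoprime
  replace hr : ∀ a ∈ s, (r a).natDegree ≤ k := fun a ha => natDegree_le_iff_coeff_eq_zero.2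
    fun m hm => coeff_eq_zero_of_degree_lt ((hr a ha).trans_le (by simpa using mod_cast hm))
  simp only [Finset.prod_pow] at hqr
  change N = q * nodal s id ^ (k + 1) + ∑ a ∈ s, r a * nodal (s.erase a) id ^ (k + 1) at hqr
  have hsum : (∑ a ∈ s, r a * nodal (s.erase a) id ^ (k + 1)).natDegree ≤ s.card * (k + 1) - 1 :=
    natDegree_sum_le_of_forall_le _ _ fun a ha => natDegree_mul_le.trans <| by
      have := natDegree_nodal_erase_pow_add ha (k + 1)
      have := hr a ha
      lia
  have hq : q = 0 := by
    by_contra hq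
    have hdeg : (q * nodal s id ^ (k + 1)).natDegree = q.natDegree + s.card * (k + 1) := by
      rw [mul_comm, (nodal_monic.pow _).natDegree_mul' hq, nodal_monic.natDegree_pow,
        natDegree_nodal, mul_comm (k + 1), add_comm]
    have := natDegree_sub_le_of_le (Nat.le_sub_one_of_lt hN) hsum
    rw [← eq_sub_of_add_eq hqr.symm, hdeg] at this
    lia
  exact ⟨r, hr, by rwa [hq, zero_mul, zero_add] at hqr⟩

/-- By the degree condition, `N(z) / ∏ b ∈ s, (z - b) ^ (k + 1)` has no residue at infinity. -/
lemma sum_weightedResidue_one_eq_zero {k : ℕ} {N : F[X]}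
    (hN : N.natDegree + 1 < s.card * (k + 1)) : ∑ a ∈ s, weightedResidue s k a 1 N = 0 := by
  obtain ⟨r, hr, hNr⟩ := exists_eq_sum_mul_nodal_erase_pow (Nat.lt_of_succ_lt hN)
  have hres : ∀ a ∈ s, weightedResidue s k a 1 N = (r a).coeff k := by
    intro a ha
    rw [hNr, map_sum, Finset.sum_eq_single_of_mem a ha, weightedResidue_mul_nodal_erase_pow,
      one_mul, coeff_taylorSeries_of_natDegree_le (hr a ha)]
    intro b _ hba
    exact weightedResidue_eq_zero_of_pow_dvd _ (dvd_mul_of_dvd_right (pow_dvd_pow_of_dvd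
      (X_sub_C_dvd_nodal id (Finset.mem_erase.2 ⟨hba.symm, ha⟩)) _) _)
  have hcoeff : ∀ a ∈ s, (r a * nodal (s.erase a) id ^ (k + 1)).coeff (s.card * (k + 1) - 1) =
      (r a).coeff k := by
    intro a ha
    have hdeg := natDegree_nodal_erase_pow_add ha (k + 1)
    rw [← hdeg, Nat.add_sub_assoc (by lia), Nat.add_sub_cancel, add_comm _ k,
      coeff_mul_add_eq_of_natDegree_le (hr a ha) le_rfl, (nodal_monic.pow _).coeff_natDegree,
      mul_one]
  rw [Finset.sum_congr rfl hres, ← Finset.sum_congr rfl hcoeff, ← finsetSum_coeff, ← hNr]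
  exact coeff_eq_zero_of_natDegree_lt (by lia)

/-- Exact differentials have no residue; the hypothesis on `G` is the differential equation of
`(X + T + a) ^ (α - 1)`. -/
lemma weightedResidue_exactNumerator (ha : a ∈ s) (k : ℕ) {T α : F} {G : PowerSeries F}
    (hG : PowerSeries.derivative F ((PowerSeries.X + PowerSeries.C (T + a)) * G) =
      PowerSeries.C α * G) (R : F[X]) :
    weightedResidue s k a G (exactNumerator s k T α R) = 0 := by
  rw [← coeff_derivative_div_eq_zero (cofactorSeries_mul_inv s a)
    ((PowerSeries.X + PowerSeries.C (T + a)) * G * taylorSeries a R) k, weightedResidue_apply,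
    ← taylorSeries_nodal ha, Derivation.leibniz _ (_ * G), hG, derivative_taylorSeries,
    derivative_taylorSeries]
  simp only [exactNumerator, map_add, map_mul, map_sub, taylorSeries_C, taylorSeries_X, map_natCast,
    smul_eq_mul, nsmul_eq_mul]
  congr 1
  ring

lemma weightedResidue_pow_mul_nodal_erase_pow {b : F} (hb : b ∈ s) (k : ℕ) (a : F)
    (G : PowerSeries F) :
    weightedResidue s k b G ((X - C a) ^ k * nodal (s.erase a) id ^ (k + 1)) =
      if b = a then PowerSeries.constantCoeff G else 0 := by
  split_ifs with hba
  · rw [hba, weightedResidue_mul_nodal_erase_pow, map_pow, taylorSeries_X_sub_C, sub_self, map_zero,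
      add_zero, PowerSeries.coeff_mul_X_pow', if_pos le_rfl, Nat.sub_self,
      PowerSeries.coeff_zero_eq_constantCoeff]
  · exact weightedResidue_eq_zero_of_pow_dvd _ (dvd_mul_of_dvd_right (pow_dvd_pow_of_dvd
      (X_sub_C_dvd_nodal id (Finset.mem_erase.2 ⟨hba, hb⟩)) _) _)

/-- A combination of residues killing `1, X, …, X ^ (#s - 1)` vanishes identically, because every
polynomial is congruent modulo the exact numerators to one of degree less than `#s`. -/
lemma eq_zero_of_sum_mul_weightedResidue_X_pow_eq_zero {k : ℕ} {T α : F}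
    {G : F → PowerSeries F} {v : F → F} (hα : ∀ r : ℕ, α + r - k * s.card ≠ 0)
    (hG0 : ∀ a ∈ s, PowerSeries.constantCoeff (G a) ≠ 0)
    (hG : ∀ a ∈ s, PowerSeries.derivative F ((PowerSeries.X + PowerSeries.C (T + a)) * G a) =
      PowerSeries.C α * G a)
    (hv : ∀ i < s.card, ∑ a ∈ s, v a * weightedResidue s k a (G a) (X ^ i) = 0) :
    ∀ a ∈ s, v a = 0 := by
  set l : F[X] →ₗ[F] F := ∑ a ∈ s, v a • weightedResidue s k a (G a) with hl
  have hl_apply (N : F[X]) : l N = ∑ a ∈ s, v a * weightedResidue s k a (G a) N := by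
    simp only [hl, LinearMap.sum_apply, LinearMap.smul_apply, smul_eq_mul]
  have hexact (r : ℕ) : l (exactNumerator s k T α (X ^ r)) = 0 := by
    rw [hl_apply]
    exact Finset.sum_eq_zero fun a ha => by
      rw [weightedResidue_exactNumerator ha k (hG a ha), mul_zero]
  have hzero : l = 0 := linearMap_eq_zero_of_natDegree_le
    (fun i hi => (hl_apply _).trans (hv i hi)) hexact
    (natDegree_exactNumerator_X_pow_le s k T α)
    fun r => (coeff_exactNumerator_X_pow_add_card s k T α r).trans_ne (hα r)
  intro a ha
  have hla := hl_apply ((X - C a) ^ k * nodal (s.erase a) id ^ (k + 1))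
  rw [hzero, LinearMap.zero_apply, Finset.sum_congr rfl fun b hb => by
    rw [weightedResidue_pow_mul_nodal_erase_pow hb, mul_ite, mul_zero],
    Finset.sum_ite_eq_of_mem' s a _ ha] at hla
  exact (mul_eq_zero.1 hla.symm).resolve_right (hG0 a ha)

end Residues

section BinomialPower

open Polynomial

lemma succ_mul_choose_succ (r : ℂ) (n : ℕ) :
    ((n : ℂ) + 1) * Ring.choose r (n + 1) = (r - n) * Ring.choose r n := by
  have h := Ring.choose_smul_choose r (Nat.le_succ n)
  rw [Nat.succ_eq_add_one, Nat.choose_succ_self_right, nsmul_eq_mul, Nat.add_sub_cancel_left,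
    Ring.choose_one_right] at h
  push_cast at h
  rw [h, mul_comm]

lemma four_pow_mul_choose_neg_half (n : ℕ) :
    (4 : ℂ) ^ n * Ring.choose (-1 / 2 : ℂ) n = (-1) ^ n * n.centralBinom := by
  induction n with
  | zero => simp
  | succ n ih =>
    have hchoose := succ_mul_choose_succ (-1 / 2) n
    have hcentral : ((n : ℂ) + 1) * (n + 1).centralBinom = 2 * (2 * n + 1) * n.centralBinom := by
      exact_mod_cast congrArg (Nat.cast (R := ℂ)) (Nat.succ_mul_centralBinom_succ n)
    apply mul_left_cancel₀ (Nat.cast_add_one_ne_zero n : (n : ℂ) + 1 ≠ 0)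
    rw [pow_succ, pow_succ]
    linear_combination (4 ^ n * 4) * hchoose + 4 * (-1 / 2 - n) * ih + (-1) ^ n * hcentral

lemma pow_mul_choose_add_natCast_mem {O : Subring ℂ} {r c : ℂ} (hc : c ∈ O)
    (hr : ∀ n : ℕ, c ^ n * Ring.choose r n ∈ O) (k n : ℕ) :
    c ^ n * Ring.choose (r + k) n ∈ O := by
  induction k generalizing n with
  | zero => simpa using hr n
  | succ k ih =>
    rw [Nat.cast_succ, ← add_assoc]
    cases n with
    | zero => simp [O.one_mem]
    | succ n =>
      rw [Ring.choose_succ_succ, mul_add, pow_succ' _ n, mul_assoc, ← pow_succ']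
      exact O.add_mem (O.mul_mem hc (ih n)) (ih (n + 1))

lemma four_pow_mul_choose_half_mem (O : Subring ℂ) (k n : ℕ) :
    4 ^ n * Ring.choose (1 / 2 + k : ℂ) n ∈ O := by
  have hbase (n : ℕ) : (4 : ℂ) ^ n * Ring.choose (-1 / 2 : ℂ) n ∈ O := by
    rw [four_pow_mul_choose_neg_half]
    exact O.mul_mem (O.pow_mem (O.neg_mem O.one_mem) n) (natCast_mem O _)
  have h := pow_mul_choose_add_natCast_mem (ofNat_mem O 4) hbase (k + 1) n
  rwa [show (-1 / 2 + (k + 1 : ℕ) : ℂ) = 1 / 2 + k by push_cast; ring] at h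

lemma norm_choose_half_le_one (n : ℕ) : ‖Ring.choose (1 / 2 : ℂ) n‖ ≤ 1 := by
  induction n with
  | zero => simp
  | succ n ih =>
    have hn : (0 : ℝ) < n + 1 := by positivity
    have hsucc := congrArg norm (succ_mul_choose_succ (1 / 2) n)
    rw [norm_mul, norm_mul, show (n : ℂ) + 1 = ((n + 1 : ℝ) : ℂ) by push_cast; rfl,
      show (1 / 2 : ℂ) - n = ((1 / 2 - n : ℝ) : ℂ) by push_cast; ring,
      Complex.norm_real, Complex.norm_real, Real.norm_of_nonneg hn.le] at hsucc
    have hle : ‖(1 / 2 - n : ℝ)‖ ≤ n + 1 := by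
      rw [Real.norm_eq_abs, abs_le]
      constructor <;> linarith
    exact le_of_mul_le_mul_left (hsucc.trans_le (mul_le_mul hle ih (norm_nonneg _) hn.le)) hn

lemma norm_choose_add_natCast_le {r : ℂ} (hr : ∀ n, ‖Ring.choose r n‖ ≤ 1) (k n : ℕ) :
    ‖Ring.choose (r + k) n‖ ≤ 2 ^ k := by
  induction k generalizing n with
  | zero => simpa using hr n
  | succ k ih =>
    rw [Nat.cast_succ, ← add_assoc]
    cases n with
    | zero => simpa using one_le_pow₀ (one_le_two (α := ℝ))
    | succ n =>
      rw [Ring.choose_succ_succ, pow_succ, mul_two]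
      exact norm_add_le_of_le (ih n) (ih (n + 1))

/-- The expansion of `(u + t) ^ (β + k) / u ^ β` in powers of `t`, which does not involve the choice
of a branch of `u ^ β`. -/
noncomputable def binomialPower (β : ℂ) (k : ℕ) (u : ℂ) : PowerSeries ℂ :=
  PowerSeries.mk fun n => Ring.choose (β + k) n * u ^ ((k : ℤ) - n)

lemma constantCoeff_binomialPower (β : ℂ) (k : ℕ) (u : ℂ) :
    PowerSeries.constantCoeff (binomialPower β k u) = u ^ k := by
  simp [binomialPower, ← PowerSeries.coeff_zero_eq_constantCoeff_apply]

lemma derivative_X_add_C_mul_binomialPower (β : ℂ) (k : ℕ) {u : ℂ} (hu : u ≠ 0) :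
    PowerSeries.derivative ℂ ((PowerSeries.X + PowerSeries.C u) * binomialPower β k u) =
      PowerSeries.C (β + k + 1) * binomialPower β k u := by
  ext n
  have hz : u * u ^ ((k : ℤ) - (n + 1 : ℕ)) = u ^ ((k : ℤ) - n) := by
    rw [← zpow_one_add₀ hu]; congr 1; push_cast; ring
  have hchoose := succ_mul_choose_succ (β + k) n
  rw [PowerSeries.coeff_derivative, add_mul, map_add, PowerSeries.coeff_succ_X_mul,
    PowerSeries.coeff_C_mul, PowerSeries.coeff_C_mul]
  simp only [binomialPower, PowerSeries.coeff_mk]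
  linear_combination (u * u ^ ((k : ℤ) - (n + 1 : ℕ))) * hchoose +
    (β + k - n) * Ring.choose (β + k) n * hz

lemma hasSum_choose_mul_pow (β : ℂ) {x : ℂ} (hx : ‖x‖ < 1) :
    HasSum (fun n : ℕ => Ring.choose β n * x ^ n) ((1 + x) ^ β) := by
  have h := (Complex.one_add_cpow_hasFPowerSeriesOnBall_zero (a := β)).hasSum (y := x)
    (by rwa [Metric.mem_eball, edist_zero_right, ← ofReal_norm, ENNReal.ofReal_lt_one])
  simpa only [zero_add, binomialSeries_apply, List.ofFn_const, List.prod_replicate,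
    smul_eq_mul] using h

lemma coeff_taylorSeries_X_pow {F : Type*} [Field F] (a : F) (m n : ℕ) :
    PowerSeries.coeff n (taylorSeries a (X ^ m)) = a ^ (m - n) * m.choose n := by
  rw [taylorSeries_eq_coe_taylor, coeff_coe, taylor_X_pow, coeff_X_add_C_pow]

lemma one_add_ne_zero_of_norm_lt_one {x : ℂ} (hx : ‖x‖ < 1) : 1 + x ≠ 0 := fun h => by
  rw [eq_neg_of_add_eq_zero_right h, norm_neg, norm_one] at hx
  exact lt_irrefl _ hx

/-- The coefficients of `(T + a + t) ^ (β + k) / T ^ β`, expanded in powers of `T⁻¹`. -/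
lemma hasSum_coeff_binomialPower (β : ℂ) (k n : ℕ) {T a : ℂ} (hT : T ≠ 0) (ha : ‖a / T‖ < 1) :
    HasSum (fun m : ℕ => T ^ k * Ring.choose (β + k) m * T⁻¹ ^ m *
        PowerSeries.coeff n (taylorSeries a (X ^ m)))
      ((1 + a / T) ^ β * PowerSeries.coeff n (binomialPower β k (T + a))) := by
  rw [← hasSum_nat_add_iff' n, Finset.sum_eq_zero, sub_zero]
  · convert! (hasSum_choose_mul_pow (β + k - n) ha).mul_left
      (T ^ ((k : ℤ) - n) * Ring.choose (β + k) n) using 1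
    · ext m
      have hchoose := Ring.choose_smul_choose (β + k) (Nat.le_add_left n m)
      rw [nsmul_eq_mul, Nat.add_sub_cancel] at hchoose
      rw [coeff_taylorSeries_X_pow, Nat.add_sub_cancel, div_pow, zpow_sub₀ hT, zpow_natCast,
        zpow_natCast, mul_assoc (T ^ (k : ℕ) / T ^ n), ← mul_assoc (Ring.choose _ n), ← hchoose,
        pow_add, inv_pow, inv_pow]
      field_simp
    · rw [binomialPower, PowerSeries.coeff_mk, show T + a = T * (1 + a / T) by field_simp, mul_zpow,
        show β + k - n = β + (((k : ℤ) - n : ℤ) : ℂ) by push_cast; ring,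
        Complex.cpow_add _ _ (one_add_ne_zero_of_norm_lt_one ha), Complex.cpow_intCast]
      ring
  · intro m hm
    rw [coeff_taylorSeries_X_pow, Nat.choose_eq_zero_of_lt (Finset.mem_range.1 hm), Nat.cast_zero,
      mul_zero, mul_zero]

lemma hasSum_weightedResidue_binomialPower (s : Finset ℂ) (β : ℂ) (k i : ℕ) {T a : ℂ} (hT : T ≠ 0)
    (ha : ‖a / T‖ < 1) :
    HasSum (fun m : ℕ => T ^ k * Ring.choose (β + k) m * T⁻¹ ^ m *
        weightedResidue s k a 1 (X ^ (m + i)))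
      ((1 + a / T) ^ β * weightedResidue s k a (binomialPower β k (T + a)) (X ^ i)) := by
  set D := (cofactorSeries s a)⁻¹ ^ (k + 1) with hD
  have hcoeff (G : PowerSeries ℂ) (N : ℂ[X]) : weightedResidue s k a G N =
      ∑ p ∈ Finset.HasAntidiagonal.antidiagonal k, PowerSeries.coeff p.1 G *
        PowerSeries.coeff p.2 (D * taylorSeries a N) := by
    rw [weightedResidue_apply, mul_assoc, PowerSeries.coeff_mul]
  have hone (m : ℕ) : weightedResidue s k a 1 (X ^ (m + i)) =
      ∑ p ∈ Finset.HasAntidiagonal.antidiagonal k, PowerSeries.coeff p.1 (taylorSeries a (X ^ m)) *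
        PowerSeries.coeff p.2 (D * taylorSeries a (X ^ i)) := by
    rw [weightedResidue_apply, ← hD, ← PowerSeries.coeff_mul, pow_add X, map_mul (taylorSeries a)]
    congr 1; ring
  simp only [hone, hcoeff, Finset.mul_sum, ← mul_assoc]
  exact hasSum_sum fun p _ => (hasSum_coeff_binomialPower β k p.1 hT ha).mul_right _

end BinomialPower

lemma inv_X_add_C_eq_mk {F : Type*} [Field F] {d : F} (hd : d ≠ 0) :
    (PowerSeries.X + PowerSeries.C d)⁻¹ = PowerSeries.mk fun n => (-1) ^ n * d⁻¹ ^ (n + 1) := by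
  rw [PowerSeries.inv_eq_iff_mul_eq_one (by simpa)]
  ext n
  rw [mul_add, map_add, PowerSeries.coeff_mul_C]
  cases n with
  | zero => simp [hd]
  | succ n =>
    simp only [PowerSeries.coeff_succ_mul_X, PowerSeries.coeff_mk, PowerSeries.coeff_one,
      if_neg n.succ_ne_zero, pow_succ]
    field_simp
    ring

lemma inv_cofactorSeries {F : Type*} [Field F] [DecidableEq F] (s : Finset F) (a : F) :
    (cofactorSeries s a)⁻¹ = ∏ b ∈ s.erase a, (PowerSeries.X + PowerSeries.C (a - b))⁻¹ := by
  have hne (b : F) (hb : b ∈ s.erase a) : PowerSeries.constantCoeff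
      (PowerSeries.X + PowerSeries.C (a - b)) ≠ 0 := by
    simpa [sub_eq_zero] using (Finset.ne_of_mem_erase hb).symm
  have hprod : cofactorSeries s a = ∏ b ∈ s.erase a, (PowerSeries.X + PowerSeries.C (a - b)) := by
    simp only [cofactorSeries, Lagrange.nodal, map_prod, id, taylorSeries_X_sub_C]
  rw [PowerSeries.inv_eq_iff_mul_eq_one]
  · rw [hprod, ← Finset.prod_mul_distrib]
    exact Finset.prod_eq_one fun b hb => PowerSeries.inv_mul_cancel _ (hne b hb)
  · rw [hprod, map_prod]
    exact Finset.prod_ne_zero_iff.2 hne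

section WeightedNorm

section NormedRing

variable {R : Type*} [NormedRing R] {ρ : ℝ} {k : ℕ}

/-- The weighted `ℓ¹` norm of the truncation of a power series at degree `k`; for `0 ≤ ρ` it is
submultiplicative, and so bounds the coefficients of products and powers. -/
noncomputable def weightedNorm (ρ : ℝ) (k : ℕ) (F : PowerSeries R) : ℝ :=
  ∑ n ∈ Finset.range (k + 1), ‖PowerSeries.coeff n F‖ * ρ ^ n

lemma weightedNorm_nonneg (hρ : 0 ≤ ρ) (F : PowerSeries R) : 0 ≤ weightedNorm ρ k F :=
  Finset.sum_nonneg fun _ _ => by positivity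

lemma norm_coeff_mul_pow_le_weightedNorm (hρ : 0 ≤ ρ) (F : PowerSeries R) :
    ‖PowerSeries.coeff k F‖ * ρ ^ k ≤ weightedNorm ρ k F :=
  Finset.single_le_sum (f := fun n => ‖PowerSeries.coeff n F‖ * ρ ^ n)
    (fun _ _ => by positivity) (Finset.self_mem_range_succ k)

lemma weightedNorm_mul_le (hρ : 0 ≤ ρ) (F G : PowerSeries R) :
    weightedNorm ρ k (F * G) ≤ weightedNorm ρ k F * weightedNorm ρ k G := by
  rw [weightedNorm, weightedNorm, weightedNorm, Finset.sum_mul_sum, ← Finset.sum_product']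
  refine le_trans (Finset.sum_le_sum fun n hn => ?_)
    (Finset.sum_fiberwise_le_sum_of_sum_fiber_nonneg (t := Finset.range (k + 1))
      (g := fun p : ℕ × ℕ => p.1 + p.2) fun _ _ => Finset.sum_nonneg fun _ _ => by positivity)
  rw [PowerSeries.coeff_mul]
  calc _ ≤ (∑ p ∈ Finset.HasAntidiagonal.antidiagonal n,
        ‖PowerSeries.coeff p.1 F‖ * ‖PowerSeries.coeff p.2 G‖) * ρ ^ n := by
        gcongr; exact norm_sum_le_of_le _ fun _ _ => norm_mul_le _ _
    _ = ∑ p ∈ Finset.HasAntidiagonal.antidiagonal n, ‖PowerSeries.coeff p.1 F‖ * ρ ^ p.1 *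
          (‖PowerSeries.coeff p.2 G‖ * ρ ^ p.2) := by
        rw [Finset.sum_mul]
        refine Finset.sum_congr rfl fun p hp => ?_
        rw [← Finset.HasAntidiagonal.mem_antidiagonal.1 hp, pow_add]
        ring
    _ ≤ _ := by
        refine Finset.sum_le_sum_of_subset_of_nonneg (fun p hp => ?_) fun _ _ _ => by positivity
        have hsum := Finset.HasAntidiagonal.mem_antidiagonal.1 hp
        have hlt := Finset.mem_range.1 hn
        simp only [Finset.mem_filter, Finset.mem_product, Finset.mem_range]
        lia

lemma weightedNorm_one [NormOneClass R] : weightedNorm ρ k (1 : PowerSeries R) = 1 := by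
  rw [weightedNorm, Finset.sum_eq_single 0]
  · simp
  · intro n _ hn
    rw [PowerSeries.coeff_one, if_neg hn, norm_zero, zero_mul]
  · simp

lemma weightedNorm_pow_le [NormOneClass R] (hρ : 0 ≤ ρ) (F : PowerSeries R) (n : ℕ) :
    weightedNorm ρ k (F ^ n) ≤ weightedNorm ρ k F ^ n := by
  induction n with
  | zero => simp [weightedNorm_one]
  | succ n ih =>
    rw [pow_succ, pow_succ]
    exact (weightedNorm_mul_le hρ _ _).trans
      (mul_le_mul_of_nonneg_right ih (weightedNorm_nonneg hρ F))

lemma weightedNorm_X_add_C_le [NormOneClass R] (hρ : 0 ≤ ρ) (a : R) :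
    weightedNorm ρ k (PowerSeries.X + PowerSeries.C a) ≤ ‖a‖ + ρ := by
  have hcoeff (n : ℕ) : ‖PowerSeries.coeff n (PowerSeries.X + PowerSeries.C a)‖ * ρ ^ n =
      (if n = 0 then ‖a‖ else 0) + (if n = 1 then ρ else 0) := by
    match n with
    | 0 => simp
    | 1 => simp
    | n + 2 => simp [PowerSeries.coeff_X]
  rw [weightedNorm, Finset.sum_congr rfl fun n _ => hcoeff n, Finset.sum_add_distrib,
    Finset.sum_ite_eq', Finset.sum_ite_eq']
  gcongr <;> split_ifs <;> simp [hρ]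

end NormedRing

section NormedField

variable {F : Type*} [NormedField F] {ρ : ℝ} {k : ℕ}

lemma weightedNorm_prod_le {ι : Type*} (hρ : 0 ≤ ρ) (t : Finset ι) (f : ι → PowerSeries F) :
    weightedNorm ρ k (∏ i ∈ t, f i) ≤ ∏ i ∈ t, weightedNorm ρ k (f i) := by
  classical
  induction t using Finset.induction_on with
  | empty => simp [weightedNorm_one]
  | insert i t hi ih =>
    rw [Finset.prod_insert hi, Finset.prod_insert hi]
    exact (weightedNorm_mul_le hρ _ _).trans
      (mul_le_mul_of_nonneg_left ih (weightedNorm_nonneg hρ _))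

lemma weightedNorm_inv_X_add_C_le {d : F} (hρ : 0 ≤ ρ) (hd : ρ < ‖d‖) :
    weightedNorm ρ k (PowerSeries.X + PowerSeries.C d)⁻¹ ≤ (‖d‖ - ρ)⁻¹ := by
  have hd0 : 0 < ‖d‖ := hρ.trans_lt hd
  have hr : ρ / ‖d‖ < 1 := (div_lt_one hd0).2 hd
  have hcoeff (n : ℕ) : ‖PowerSeries.coeff n (PowerSeries.X + PowerSeries.C d)⁻¹‖ * ρ ^ n =
      ‖d‖⁻¹ * (ρ / ‖d‖) ^ n := by
    rw [inv_X_add_C_eq_mk (norm_pos_iff.1 hd0), PowerSeries.coeff_mk, norm_mul, norm_pow,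
      norm_neg, norm_one, one_pow, one_mul, norm_pow, norm_inv, pow_succ, div_pow, inv_pow]
    ring
  calc _ = ‖d‖⁻¹ * ∑ n ∈ Finset.range (k + 1), (ρ / ‖d‖) ^ n := by
        rw [weightedNorm, Finset.sum_congr rfl fun n _ => hcoeff n, Finset.mul_sum]
    _ ≤ ‖d‖⁻¹ * (1 - ρ / ‖d‖)⁻¹ := by
        gcongr
        rw [← tsum_geometric_of_lt_one (by positivity) hr]
        exact (summable_geometric_of_lt_one (by positivity) hr).sum_le_tsum _
          fun _ _ => by positivity
    _ = _ := by rw [← mul_inv, mul_one_sub, mul_div_cancel₀ _ hd0.ne']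

lemma weightedNorm_taylorSeries_X_pow_le (hρ : 0 ≤ ρ) (a : F) (n : ℕ) :
    weightedNorm ρ k (taylorSeries a (Polynomial.X ^ n)) ≤ (‖a‖ + ρ) ^ n := by
  rw [map_pow, taylorSeries_X]
  exact (weightedNorm_pow_le hρ _ _).trans
    (pow_le_pow_left₀ (weightedNorm_nonneg hρ _) (weightedNorm_X_add_C_le hρ a) _)

variable [DecidableEq F]

lemma weightedNorm_half_inv_cofactorSeries_le {s : Finset F} {a : F}
    (hs : ∀ b ∈ s.erase a, 1 ≤ ‖a - b‖) :
    weightedNorm (1 / 2) k (cofactorSeries s a)⁻¹ ≤ 2 ^ (s.erase a).card := by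
  rw [inv_cofactorSeries, ← Finset.prod_const]
  refine (weightedNorm_prod_le (by positivity) _ _).trans
    (Finset.prod_le_prod (fun _ _ => weightedNorm_nonneg (by positivity) _) fun b hb => ?_)
  have hb1 := hs b hb
  refine (weightedNorm_inv_X_add_C_le (by positivity) (by linarith)).trans ?_
  rw [inv_le_comm₀ (by linarith) two_pos]
  linarith

lemma norm_weightedResidue_X_pow_le {s : Finset F} {a : F} {G : PowerSeries F} {M : ℝ} (hM : 1 ≤ M)
    (ha : ‖a‖ ≤ M) (hs : ∀ b ∈ s.erase a, 1 ≤ ‖a - b‖) (m : ℕ) :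
    ‖weightedResidue s k a G (Polynomial.X ^ m)‖ ≤
      2 ^ k * (weightedNorm (1 / 2) k G * (2 ^ (s.erase a).card) ^ (k + 1) * (2 * M) ^ m) := by
  have hhalf : (0 : ℝ) ≤ 1 / 2 := by positivity
  have hG := weightedNorm_nonneg (k := k) hhalf G
  have hcoeff := norm_coeff_mul_pow_le_weightedNorm (k := k) hhalf
    (G * (cofactorSeries s a)⁻¹ ^ (k + 1) * taylorSeries a (Polynomial.X ^ m))
  rw [one_div, inv_pow, ← div_eq_mul_inv, div_le_iff₀' (by positivity), ← one_div] at hcoeff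
  rw [weightedResidue_apply]
  refine hcoeff.trans ?_
  gcongr
  refine (weightedNorm_mul_le hhalf _ _).trans (mul_le_mul ?_ ?_ (weightedNorm_nonneg hhalf _)
    (by positivity))
  · refine (weightedNorm_mul_le hhalf _ _).trans (mul_le_mul_of_nonneg_left ?_ hG)
    exact (weightedNorm_pow_le hhalf _ _).trans (pow_le_pow_left₀ (weightedNorm_nonneg hhalf _)
      (weightedNorm_half_inv_cofactorSeries_le hs) _)
  · refine (weightedNorm_taylorSeries_X_pow_le hhalf a m).trans ?_
    gcongr
    linarith

end NormedField

lemma weightedNorm_half_binomialPower_le {k : ℕ} {u : ℂ} {R : ℝ} (hu : ‖u‖ ≤ R) (hR : 1 ≤ R) :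
    weightedNorm (1 / 2) k (binomialPower (1 / 2) k u) ≤ 2 * (2 * R) ^ k := by
  have hcoeff (n : ℕ) (hn : n ≤ k) :
      ‖PowerSeries.coeff n (binomialPower (1 / 2) k u)‖ ≤ (2 * R) ^ k := by
    rw [binomialPower, PowerSeries.coeff_mk, norm_mul, mul_pow,
      show ((k : ℤ) - n) = ((k - n : ℕ) : ℤ) by lia, zpow_natCast, norm_pow]
    exact mul_le_mul (norm_choose_add_natCast_le norm_choose_half_le_one k n)
      ((pow_le_pow_left₀ (norm_nonneg _) hu _).trans (pow_le_pow_right₀ hR (Nat.sub_le k n)))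
      (by positivity) (by positivity)
  calc _ ≤ ∑ n ∈ Finset.range (k + 1), (2 * R) ^ k * (1 / 2) ^ n :=
        Finset.sum_le_sum fun n hn => mul_le_mul_of_nonneg_right
          (hcoeff n (Nat.lt_succ_iff.1 (Finset.mem_range.1 hn))) (by positivity)
    _ ≤ (2 * R) ^ k * 2 := by
        rw [← Finset.mul_sum]
        gcongr
        exact sum_geometric_two_le (k + 1)
    _ = _ := mul_comm _ _

end WeightedNorm

section Integrality

variable {O : Subring ℂ} {k : ℕ}

lemma mul_coeff_mul_mem {F G : PowerSeries ℂ} {r s : ℂ} {n : ℕ}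
    (hF : ∀ m ≤ n, r * PowerSeries.coeff m F ∈ O) (hG : ∀ m ≤ n, s * PowerSeries.coeff m G ∈ O) :
    r * s * PowerSeries.coeff n (F * G) ∈ O := by
  rw [PowerSeries.coeff_mul, Finset.mul_sum]
  refine O.sum_mem fun p hp => ?_
  rw [mul_mul_mul_comm]
  exact O.mul_mem (hF _ (Finset.HasAntidiagonal.antidiagonal.fst_le hp))
    (hG _ (Finset.HasAntidiagonal.antidiagonal.snd_le hp))

lemma pow_add_mul_coeff_pow_mem {F : PowerSeries ℂ} {D : ℂ}
    (hF : ∀ n, D ^ (n + 1) * PowerSeries.coeff n F ∈ O) (j n : ℕ) :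
    D ^ (n + j) * PowerSeries.coeff n (F ^ j) ∈ O := by
  induction j generalizing n with
  | zero =>
    rw [pow_zero, PowerSeries.coeff_one]
    split_ifs with h
    · simp [h]
    · simp
  | succ j ih =>
    rw [pow_succ, PowerSeries.coeff_mul, Finset.mul_sum]
    refine O.sum_mem fun p hp => ?_
    rw [show n + (j + 1) = (p.1 + j) + (p.2 + 1) by
        rw [← Finset.HasAntidiagonal.mem_antidiagonal.1 hp]; ring,
      pow_add, mul_mul_mul_comm]
    exact O.mul_mem (ih _) (hF _)

lemma prod_pow_mul_coeff_prod_inv_X_add_C_mem {ι : Type*} {t : Finset ι} {d : ι → ℂ}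
    (hd : ∀ i ∈ t, d i ∈ O) (hd0 : ∀ i ∈ t, d i ≠ 0) (n : ℕ) :
    (∏ i ∈ t, d i) ^ (n + 1) * PowerSeries.coeff n
      (∏ i ∈ t, (PowerSeries.X + PowerSeries.C (d i))⁻¹) ∈ O := by
  classical
  induction t using Finset.induction_on generalizing n with
  | empty =>
    rw [Finset.prod_empty, one_pow, one_mul, Finset.prod_empty, PowerSeries.coeff_one]
    split_ifs <;> simp
  | insert i t hi ih =>
    rw [Finset.forall_mem_insert] at hd hd0
    have hmul {u v : ℂ} {m : ℕ} (hm : m ≤ n) (hu : u ∈ O)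
        (h : u ^ (m + 1) * v ∈ O) : u ^ (n + 1) * v ∈ O := by
      rw [show n + 1 = (n - m) + (m + 1) by lia, pow_add, mul_assoc]
      exact O.mul_mem (O.pow_mem hu _) h
    rw [Finset.prod_insert hi, Finset.prod_insert hi, mul_pow]
    refine mul_coeff_mul_mem (fun m hm => hmul hm hd.1 ?_)
      fun m hm => hmul hm (O.prod_mem hd.2) (ih hd.2 hd0.2 m)
    rw [inv_X_add_C_eq_mk hd0.1, PowerSeries.coeff_mk, mul_left_comm, ← mul_pow,
      mul_inv_cancel₀ hd0.1, one_pow, mul_one]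
    exact O.pow_mem (O.neg_mem O.one_mem) m

lemma pow_mul_coeff_inv_cofactorSeries_mem {s : Finset ℂ} {a D : ℂ} (hs : ∀ b ∈ s, b ∈ O)
    (ha : a ∈ s) (hD : ∃ r ∈ O, D = (∏ b ∈ s.erase a, (a - b)) * r) (n : ℕ) :
    D ^ (n + 1) * PowerSeries.coeff n (cofactorSeries s a)⁻¹ ∈ O := by
  obtain ⟨r, hr, rfl⟩ := hD
  rw [inv_cofactorSeries, mul_pow, mul_comm (_ ^ _), mul_assoc]
  refine O.mul_mem (O.pow_mem hr _) (prod_pow_mul_coeff_prod_inv_X_add_C_mem (fun b hb => ?_)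
    (fun b hb => ?_) n)
  · exact O.sub_mem (hs a ha) (hs b (Finset.mem_of_mem_erase hb))
  · exact sub_ne_zero.2 (Finset.ne_of_mem_erase hb).symm

lemma four_pow_mul_coeff_binomialPower_half_mem {u : ℂ} (hu : u ∈ O) {n : ℕ} (hn : n ≤ k) :
    4 ^ k * PowerSeries.coeff n (binomialPower (1 / 2) k u) ∈ O := by
  rw [binomialPower, PowerSeries.coeff_mk, show ((k : ℤ) - n) = ((k - n : ℕ) : ℤ) by lia,
    zpow_natCast, ← mul_assoc, ← Nat.sub_add_cancel hn, pow_add, mul_assoc (4 ^ _),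
    Nat.sub_add_cancel hn]
  exact O.mul_mem (O.mul_mem (O.pow_mem (ofNat_mem O 4) _) (four_pow_mul_choose_half_mem O k n))
    (O.pow_mem hu _)

lemma four_pow_mul_pow_mul_weightedResidue_mem {s : Finset ℂ} {T a D : ℂ} (hT : T ∈ O)
    (hs : ∀ b ∈ s, b ∈ O) (ha : a ∈ s) (hDO : D ∈ O)
    (hD : ∃ r ∈ O, D = (∏ b ∈ s.erase a, (a - b)) * r) (i : ℕ) :
    4 ^ k * D ^ (2 * k + 1) *
      weightedResidue s k a (binomialPower (1 / 2) k (T + a)) (Polynomial.X ^ i) ∈ O := by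
  rw [weightedResidue_apply, ← mul_one (4 ^ k * D ^ (2 * k + 1))]
  refine mul_coeff_mul_mem (fun m hm => mul_coeff_mul_mem (fun n hn => ?_) fun n hn => ?_)
    fun m _ => ?_
  · exact four_pow_mul_coeff_binomialPower_half_mem (O.add_mem hT (hs a ha)) (hn.trans hm)
  · have hcofactor := pow_add_mul_coeff_pow_mem
      (pow_mul_coeff_inv_cofactorSeries_mem hs ha hD) (k + 1) n
    rw [show 2 * k + 1 = (k - n) + (n + (k + 1)) by lia, pow_add, mul_assoc]
    exact O.mul_mem (O.pow_mem hDO _) hcofactor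
  · rw [one_mul, coeff_taylorSeries_X_pow]
    exact O.mul_mem (O.pow_mem (hs a ha) _) (natCast_mem O _)

end Integrality

section Approximation

lemma norm_le_of_hasSum_of_le_geometric {E : Type*} [SeminormedAddCommGroup E] {f : ℕ → E} {S : E}
    {C r : ℝ} {n : ℕ} (hf : HasSum f S) (h0 : ∀ m < n, f m = 0) (hr0 : 0 ≤ r) (hr : r ≤ 1 / 2)
    (hfr : ∀ m, ‖f m‖ ≤ C * r ^ m) : ‖S‖ ≤ 2 * C * r ^ n := by
  rw [← hasSum_nat_add_iff' n, Finset.sum_eq_zero fun m hm => h0 m (Finset.mem_range.1 hm),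
    sub_zero] at hf
  have hC : 0 ≤ C := by simpa using (norm_nonneg _).trans (hfr 0)
  have hle := hf.norm_le_of_bounded (hasSum_geometric_two.mul_left (C * r ^ n)) fun m =>
    (hfr (m + n)).trans <| by rw [pow_add, mul_comm (r ^ m), ← mul_assoc]; gcongr
  linarith

variable {s : Finset ℂ} {n k i : ℕ} {T : ℂ} {M : ℝ}

lemma norm_sum_cpow_mul_weightedResidue_le (hM : 1 ≤ M) (hsM : ∀ a ∈ s, ‖a‖ ≤ M)
    (hsep : ∀ a ∈ s, ∀ b ∈ s.erase a, 1 ≤ ‖a - b‖) (hcard : s.card = n + 1) (hT : 4 * M ≤ ‖T‖)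
    (hi : i ≤ n) :
    ‖∑ a ∈ s, (1 + a / T) ^ (1 / 2 : ℂ) *
        weightedResidue s k a (binomialPower (1 / 2) k (T + a)) (Polynomial.X ^ i)‖ ≤
      2 * (n + 1) * (4 * M) ^ n * (2 ^ (2 * n + 3) * M ^ (n + 1) / ‖T‖ ^ n) ^ k := by
  have hTpos : 0 < ‖T‖ := by linarith
  have hlt (a : ℂ) (ha : a ∈ s) : ‖a / T‖ < 1 := by
    rw [norm_div, div_lt_one hTpos]; linarith [hsM a ha]
  have hsum := hasSum_sum fun a ha =>
    hasSum_weightedResidue_binomialPower s (1 / 2) k i (norm_pos_iff.1 hTpos) (hlt a ha)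
  simp only [← Finset.mul_sum] at hsum
  have hresidue (m : ℕ) : ‖∑ a ∈ s, weightedResidue s k a 1 (Polynomial.X ^ (m + i))‖ ≤
      (n + 1) * (2 ^ k * ((2 ^ n) ^ (k + 1) * ((2 * M) ^ m * (2 * M) ^ n))) := by
    have hle (a : ℂ) (ha : a ∈ s) : ‖weightedResidue s k a 1 (Polynomial.X ^ (m + i))‖ ≤
        2 ^ k * ((2 ^ n) ^ (k + 1) * ((2 * M) ^ m * (2 * M) ^ n)) := by
      refine (norm_weightedResidue_X_pow_le hM (hsM a ha) (hsep a ha) _).trans ?_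
      rw [weightedNorm_one, one_mul, Finset.card_erase_of_mem ha, hcard, Nat.add_sub_cancel,
        pow_add _ m i]
      gcongr
      linarith
    simpa [hcard] using norm_sum_le_of_le s hle
  have hbound := norm_le_of_hasSum_of_le_geometric
    (C := (n + 1) * (4 * M) ^ n * (2 ^ (n + 2) * ‖T‖) ^ k) (r := 2 * M / ‖T‖) (n := (n + 1) * k)
    hsum (fun m hm => ?_) (by positivity) (by rw [div_le_iff₀ hTpos]; linarith) fun m => ?_
  · refine hbound.trans_eq ?_
    have hpow : (2 ^ (n + 2) * ‖T‖) * (2 * M / ‖T‖) ^ (n + 1) =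
        2 ^ (2 * n + 3) * M ^ (n + 1) / ‖T‖ ^ n := by
      rw [div_pow, pow_succ ‖T‖]
      field_simp
      ring
    rw [pow_mul, ← hpow, mul_pow (2 ^ (n + 2) * ‖T‖) _ k]
    ring
  · rw [sum_weightedResidue_one_eq_zero, mul_zero]
    rw [Polynomial.natDegree_X_pow, hcard]
    linarith
  · rw [norm_mul, norm_mul, norm_mul, norm_pow, norm_pow, norm_inv]
    calc _ ≤ ‖T‖ ^ k * 2 ^ k * ‖T‖⁻¹ ^ m *
          ((n + 1) * (2 ^ k * ((2 ^ n) ^ (k + 1) * ((2 * M) ^ m * (2 * M) ^ n)))) := by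
          gcongr
          · exact norm_choose_add_natCast_le norm_choose_half_le_one k m
          · exact hresidue m
      _ = (n + 1) * (2 * (2 * M)) ^ n * (2 * 2 * 2 ^ n * ‖T‖) ^ k * (2 * M * ‖T‖⁻¹) ^ m := by
          simp only [mul_pow, pow_succ]; ring
      _ = _ := by rw [div_eq_mul_inv, pow_add 2 n 2]; ring_nf

lemma norm_weightedResidue_binomialPower_le {a : ℂ} (hM : 1 ≤ M) (ha : a ∈ s) (haM : ‖a‖ ≤ M)
    (hsep : ∀ b ∈ s.erase a, 1 ≤ ‖a - b‖) (hcard : s.card = n + 1) (hT : 4 * M ≤ ‖T‖)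
    (hi : i ≤ n) :
    ‖weightedResidue s k a (binomialPower (1 / 2) k (T + a)) (Polynomial.X ^ i)‖ ≤
      2 * (4 * M) ^ n * (2 ^ (n + 3) * ‖T‖) ^ k := by
  have hweight := weightedNorm_half_binomialPower_le (k := k) (R := 2 * ‖T‖)
    ((norm_add_le T a).trans (by linarith)) (by linarith)
  calc _ ≤ 2 ^ k * (weightedNorm (1 / 2) k (binomialPower (1 / 2) k (T + a)) *
          (2 ^ (s.erase a).card) ^ (k + 1) * (2 * M) ^ i) :=
        norm_weightedResidue_X_pow_le hM haM hsep i
    _ ≤ 2 ^ k * (2 * (2 * (2 * ‖T‖)) ^ k * (2 ^ n) ^ (k + 1) * (2 * M) ^ n) := by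
        rw [Finset.card_erase_of_mem ha, hcard, Nat.add_sub_cancel]
        gcongr
        linarith
    _ = 2 * (2 * (2 * M)) ^ n * (2 * (2 * 2) * 2 ^ n * ‖T‖) ^ k := by
        simp only [mul_pow, pow_succ]; ring
    _ = _ := by rw [pow_add 2 n 3]; ring_nf

lemma three_half_add_intCast_ne_zero (m : ℤ) : (3 / 2 : ℂ) + m ≠ 0 := fun h => by
  have hz : ((3 + 2 * m : ℤ) : ℂ) = 0 := by push_cast; linear_combination 2 * h
  have := Int.cast_eq_zero.1 hz
  lia

lemma exists_sum_mul_weightedResidue_binomialPower_ne_zero (hu : ∀ a ∈ s, T + a ≠ 0) {x : ℂ → ℂ}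
    (hx : ∃ a ∈ s, x a ≠ 0) :
    ∃ i < s.card, ∑ a ∈ s, x a *
      weightedResidue s k a (binomialPower (1 / 2) k (T + a)) (Polynomial.X ^ i) ≠ 0 := by
  by_contra! hzero
  obtain ⟨a, ha, hxa⟩ := hx
  refine hxa (eq_zero_of_sum_mul_weightedResidue_X_pow_eq_zero (α := 1 / 2 + k + 1)
    (G := fun a => binomialPower (1 / 2) k (T + a)) (T := T) (fun r => ?_) (fun b hb => ?_)
    (fun b hb => derivative_X_add_C_mul_binomialPower _ _ (hu b hb)) hzero a ha)
  · convert three_half_add_intCast_ne_zero (k + r - k * s.card) using 1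
    push_cast; ring
  · rw [constantCoeff_binomialPower]
    exact pow_ne_zero _ (hu b hb)

/-- Clearing denominators in a combination of residues that does not vanish gives a nonzero element
of `O`. -/
theorem one_le_of_simultaneous_approx {O : Subring ℂ} (hO : ∀ u : O, u ≠ 0 → 1 ≤ ‖u‖) (hTO : T ∈ O)
    (hsO : ∀ a ∈ s, a ∈ O) (hM : 1 ≤ M) (hsM : ∀ a ∈ s, ‖a‖ ≤ M) (hcard : s.card = n + 1)
    (hT : 4 * M ≤ ‖T‖) {D : ℂ} (hDO : D ∈ O) (hD0 : D ≠ 0)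
    (hD : ∀ a ∈ s, ∃ r ∈ O, D = (∏ b ∈ s.erase a, (a - b)) * r)
    {x : ℂ → ℂ} (hxO : ∀ a ∈ s, x a ∈ O) (hx0 : ∃ a ∈ s, x a ≠ 0) (z : ℂ) (k : ℕ) :
    1 ≤ 4 ^ k * ‖D‖ ^ (2 * k + 1) *
      (‖z‖ * (2 * (n + 1) * (4 * M) ^ n * (2 ^ (2 * n + 3) * M ^ (n + 1) / ‖T‖ ^ n) ^ k) +
        (∑ a ∈ s, ‖x a - z * (1 + a / T) ^ (1 / 2 : ℂ)‖) *
          (2 * (4 * M) ^ n * (2 ^ (n + 3) * ‖T‖) ^ k)) := by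
  have hsep (a : ℂ) (ha : a ∈ s) (b : ℂ) (hb : b ∈ s.erase a) : 1 ≤ ‖a - b‖ :=
    hO ⟨a - b, O.sub_mem (hsO a ha) (hsO b (Finset.mem_of_mem_erase hb))⟩
      (Subtype.coe_ne_coe.1 (sub_ne_zero.2 (Finset.ne_of_mem_erase hb).symm))
  have hu (a : ℂ) (ha : a ∈ s) : T + a ≠ 0 := fun h => by
    have hTa : ‖T‖ = ‖a‖ := by rw [eq_neg_of_add_eq_zero_left h, norm_neg]
    linarith [hsM a ha]
  obtain ⟨i, hi, hne⟩ := exists_sum_mul_weightedResidue_binomialPower_ne_zero (k := k) hu hx0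
  rw [hcard, Nat.lt_succ_iff] at hi
  set P := fun a => weightedResidue s k a (binomialPower (1 / 2) k (T + a)) (Polynomial.X ^ i)
  set θ := fun a => (1 + a / T) ^ (1 / 2 : ℂ)
  have hmem : 4 ^ k * D ^ (2 * k + 1) * ∑ a ∈ s, x a * P a ∈ O := by
    rw [Finset.mul_sum]
    refine O.sum_mem fun a ha => ?_
    rw [mul_left_comm]
    exact O.mul_mem (hxO a ha) (four_pow_mul_pow_mul_weightedResidue_mem hTO hsO ha hDO (hD a ha) i)
  have hsplit : ∑ a ∈ s, x a * P a = z * ∑ a ∈ s, θ a * P a + ∑ a ∈ s, (x a - z * θ a) * P a := by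
    rw [Finset.mul_sum, ← Finset.sum_add_distrib]
    exact Finset.sum_congr rfl fun a _ => by ring
  have herror : ‖∑ a ∈ s, (x a - z * θ a) * P a‖ ≤
      (∑ a ∈ s, ‖x a - z * θ a‖) * (2 * (4 * M) ^ n * (2 ^ (n + 3) * ‖T‖) ^ k) := by
    rw [Finset.sum_mul]
    refine norm_sum_le_of_le s fun a ha => ?_
    rw [norm_mul]
    gcongr
    exact norm_weightedResidue_binomialPower_le hM ha (hsM a ha) (hsep a ha) hcard hT hi
  have hne' : 4 ^ k * D ^ (2 * k + 1) * ∑ a ∈ s, x a * P a ≠ 0 :=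
    mul_ne_zero (mul_ne_zero (pow_ne_zero k (by norm_num)) (pow_ne_zero _ hD0)) hne
  refine (hO ⟨_, hmem⟩ (Subtype.coe_ne_coe.1 hne')).trans ?_
  rw [AddSubgroupClass.coe_norm, norm_mul, norm_mul, norm_pow, norm_pow, Complex.norm_ofNat, hsplit]
  gcongr
  refine norm_add_le_of_le ?_ herror
  rw [norm_mul]
  gcongr
  exact norm_sum_cpow_mul_weightedResidue_le hM hsM hsep hcard hT hi

theorem exists_mul_mul_sub_eq_prod_erase_mul {O : Subring ℂ} {p q : O} (hp : p ≠ 0) (hq : q ≠ 0)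
    (hpq : p ≠ q) : ∀ a ∈ ({0, (p : ℂ), (q : ℂ)} : Finset ℂ), ∃ r ∈ O,
      ((p * q * (p - q) : O) : ℂ) = (∏ b ∈ ({0, (p : ℂ), (q : ℂ)} : Finset ℂ).erase a, (a - b)) * r
    := by
  have hp' : (p : ℂ) ≠ 0 := Subtype.coe_ne_coe.2 hp
  have hq' : (q : ℂ) ≠ 0 := Subtype.coe_ne_coe.2 hq
  have hpq' : (p : ℂ) ≠ q := Subtype.coe_ne_coe.2 hpq
  simp only [Finset.forall_mem_insert, Finset.mem_singleton, forall_eq]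
  refine ⟨⟨p - q, (p - q).2, ?_⟩, ⟨q, q.2, ?_⟩, ⟨-p, (-p).2, ?_⟩⟩
  · rw [Finset.erase_insert (by simp [hp'.symm, hq'.symm]), Finset.prod_pair hpq']
    push_cast; ring
  · rw [Finset.erase_insert_of_ne hp'.symm, Finset.erase_insert (by simpa),
      Finset.prod_pair hq'.symm]
    push_cast; ring
  · rw [Finset.erase_insert_of_ne hq'.symm, Finset.erase_insert_of_ne hpq',
      Finset.erase_singleton, insert_empty_eq, Finset.prod_pair hp'.symm]
    push_cast; ring

/-- The case of the nodes `0`, `p`, `q`, where the approximation at the node `0` is exact. -/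
theorem one_le_of_simultaneous_approx_pair {O : Subring ℂ} (hO : ∀ u : O, u ≠ 0 → 1 ≤ ‖u‖)
    {T p q x y z : O} (hp0 : p ≠ 0) (hq0 : q ≠ 0) (hpq0 : p ≠ q) (hz0 : z ≠ 0) (hp : ‖p‖ ≤ M)
    (hq : ‖q‖ ≤ M) (hT : 4 * M ≤ ‖T‖) (k : ℕ) :
    1 ≤ 64 * M ^ 5 * (512 * M ^ 6 * ‖T‖) ^ k * (‖(x - z * (1 + p / T) ^ (1 / 2 : ℂ) : ℂ)‖ +
          ‖(y - z * (1 + q / T) ^ (1 / 2 : ℂ) : ℂ)‖) +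
      192 * M ^ 5 * (2048 * M ^ 9 / ‖T‖ ^ 2) ^ k * ‖z‖ := by
  have hM : 1 ≤ M := (hO p hp0).trans hp
  have hp0' : (p : ℂ) ≠ 0 := Subtype.coe_ne_coe.2 hp0
  have hq0' : (q : ℂ) ≠ 0 := Subtype.coe_ne_coe.2 hq0
  have hpq0' : (p : ℂ) ≠ q := Subtype.coe_ne_coe.2 hpq0
  have h0 : (0 : ℂ) ∉ ({(p : ℂ), (q : ℂ)} : Finset ℂ) := by simp [hp0'.symm, hq0'.symm]
  set D := p * q * (p - q) with hD
  have hDle : ‖D‖ ≤ 2 * M ^ 3 := by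
    rw [hD, norm_mul, norm_mul]
    calc _ ≤ M * M * (M + M) := by gcongr; exact norm_sub_le_of_le hp hq
      _ = _ := by ring
  have happrox := one_le_of_simultaneous_approx hO (s := {0, (p : ℂ), (q : ℂ)}) (n := 2)
    (T := T) (D := D) (x := fun a => if a = 0 then (z : ℂ) else if a = p then x else y)
    T.2 (by simp) hM (by simpa using ⟨zero_le_one.trans hM, hp, hq⟩)
    (by rw [Finset.card_insert_of_notMem h0, Finset.card_pair hpq0']) hT D.2
    (Subtype.coe_ne_coe.2 (mul_ne_zero (mul_ne_zero hp0 hq0) (sub_ne_zero.2 hpq0)))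
    (exists_mul_mul_sub_eq_prod_erase_mul hp0 hq0 hpq0)
    (by simp [hp0', hq0', hpq0'.symm]) ⟨0, by simp, by simpa using hz0⟩ z k
  rw [Finset.sum_insert h0, Finset.sum_pair hpq0'] at happrox
  simp only [if_true, if_neg hp0', if_neg hq0', if_neg hpq0'.symm, zero_div, add_zero,
    Complex.one_cpow, mul_one, sub_self, norm_zero, zero_add] at happrox
  refine happrox.trans ?_
  rw [AddSubgroupClass.coe_norm] at hDle
  simp only [AddSubgroupClass.coe_norm]
  set A := ‖(x - z * (1 + p / T) ^ (1 / 2 : ℂ) : ℂ)‖ + ‖(y - z * (1 + q / T) ^ (1 / 2 : ℂ) : ℂ)‖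
  calc _ ≤ 4 ^ k * (2 * M ^ 3) ^ (2 * k + 1) *
        (‖(z : ℂ)‖ * (2 * ((2 : ℕ) + 1) * (4 * M) ^ 2 *
          (2 ^ (2 * 2 + 3) * M ^ (2 + 1) / ‖(T : ℂ)‖ ^ 2) ^ k) +
        A * (2 * (4 * M) ^ 2 * (2 ^ (2 + 3) * ‖(T : ℂ)‖) ^ k)) := by gcongr
    _ = 64 * M ^ 5 * (4 ^ k * ((2 * M ^ 3) ^ 2) ^ k * (32 * ‖(T : ℂ)‖) ^ k) * A +
        192 * M ^ 5 * (4 ^ k * ((2 * M ^ 3) ^ 2) ^ k * (128 * M ^ 3 / ‖(T : ℂ)‖ ^ 2) ^ k) *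
          ‖(z : ℂ)‖ := by
        rw [pow_succ (2 * M ^ 3) (2 * k), pow_mul]; push_cast; ring
    _ = _ := by
        rw [← mul_pow, ← mul_pow, ← mul_pow]
        ring_nf

end Approximation

section UpperGap

theorem two_mul_mul_pow_mul_lt_of_forall {g τ ζ : ℝ} (hg : 2 ≤ g) (hτ : g ^ 9 ≤ τ)
    (h : ∀ k : ℕ, ζ ≤ g * (g * τ) ^ k * τ + g / 8 * (g / τ ^ 2) ^ k * ζ ^ 2) {k : ℕ} (hk : 3 ≤ k)
    (hζ : 2 * g * (g * τ) ^ k * τ < ζ) : 2 * g * (g * τ) ^ (k + 1) * τ < ζ := by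
  have hg1 : 1 ≤ g := by linarith
  have hτ0 : 0 < τ := by linarith [one_le_pow₀ hg1 (n := 9)]
  have hζ0 : 0 < ζ := lt_trans (by positivity) hζ
  have hsecond : 4 * τ ^ (2 * k) < g ^ (k + 1) * ζ := by
    have hlt : 4 * ζ < g * (g / τ ^ 2) ^ k * ζ * ζ := by nlinarith [h k]
    have hlt' := lt_of_mul_lt_mul_right hlt hζ0.le
    rw [div_pow, ← pow_mul, mul_div_assoc', div_mul_eq_mul_div, lt_div_iff₀ (by positivity),
      ← pow_succ'] at hlt'
    exact hlt'
  have hpow : g ^ (2 * k + 3) * τ ^ 2 ≤ τ ^ k := by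
    obtain ⟨n, rfl⟩ := Nat.exists_eq_add_of_le' hk
    have hsq : (g ^ 2) ^ n ≤ τ ^ n :=
      pow_le_pow_left₀ (by positivity) ((pow_le_pow_right₀ hg1 (by norm_num)).trans hτ) n
    calc _ = (g ^ 2) ^ n * g ^ 9 * τ ^ 2 := by ring
      _ ≤ τ ^ n * τ * τ ^ 2 := by gcongr
      _ = _ := by ring
  refine lt_of_mul_lt_mul_left (a := g ^ (k + 1)) ?_ (by positivity)
  calc _ = 2 * (g ^ (2 * k + 3) * τ ^ 2) * τ ^ k := by ring
    _ ≤ 2 * τ ^ k * τ ^ k := by gcongr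
    _ ≤ 4 * τ ^ (2 * k) := by rw [two_mul k, pow_add]; nlinarith [pow_pos hτ0 k]
    _ < _ := hsecond

/-- If `ζ` exceeded `τ ^ 5` it would exceed `2 * g * (g * τ) ^ k * τ` for every `k`, because the
intervals in which consecutive hypotheses are useful overlap. -/
theorem le_pow_five_of_forall {g τ ζ : ℝ} (hg : 2 ≤ g) (hτ : g ^ 9 ≤ τ)
    (h : ∀ k : ℕ, ζ ≤ g * (g * τ) ^ k * τ + g / 8 * (g / τ ^ 2) ^ k * ζ ^ 2) : ζ ≤ τ ^ 5 := by
  by_contra! hζ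
  have hg1 : 1 ≤ g := by linarith
  have hgτ : g ≤ τ := (le_self_pow₀ hg1 (by norm_num)).trans hτ
  have hlt (k : ℕ) (hk : 3 ≤ k) : 2 * g * (g * τ) ^ k * τ < ζ := by
    induction k, hk using Nat.le_induction with
    | base =>
      refine lt_of_le_of_lt ?_ hζ
      calc _ = 2 * g ^ 4 * τ ^ 4 := by ring
        _ ≤ g * g ^ 4 * τ ^ 4 := by gcongr
        _ = g ^ 5 * τ ^ 4 := by ring
        _ ≤ τ * τ ^ 4 := by gcongr; exact (pow_le_pow_right₀ hg1 (by norm_num)).trans hτ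
        _ = τ ^ 5 := by ring
    | succ k hk ih => exact two_mul_mul_pow_mul_lt_of_forall hg hτ h hk ih
  obtain ⟨n, hn⟩ := pow_unbounded_of_one_lt ζ (by linarith : 1 < g)
  refine (hlt (n + 3) (by lia)).not_ge (hn.le.trans ?_)
  calc g ^ n ≤ g ^ (n + 3) := pow_le_pow_right₀ hg1 (by lia)
    _ ≤ (g * τ) ^ (n + 3) := by gcongr; nlinarith
    _ = 1 * (g * τ) ^ (n + 3) * 1 := by ring
    _ ≤ _ := by
        have hτ0 : 0 ≤ τ := by linarith
        gcongr <;> linarith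

theorem norm_sub_mul_norm_le_or {𝕜 : Type*} [RCLike 𝕜] (x w : 𝕜) :
    ‖x - w‖ * ‖w‖ ≤ ‖x ^ 2 - w ^ 2‖ ∨ ‖-x - w‖ * ‖w‖ ≤ ‖x ^ 2 - w ^ 2‖ := by
  have hw : 2 * ‖w‖ ≤ ‖x - w‖ + ‖x + w‖ := by
    calc 2 * ‖w‖ = ‖(x + w) - (x - w)‖ := by
          rw [show (x + w) - (x - w) = 2 * w by ring, norm_mul, RCLike.norm_ofNat]
      _ ≤ _ := (norm_sub_le _ _).trans_eq (add_comm _ _)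
  rw [sq_sub_sq, norm_mul, show -x - w = -(x + w) by ring, norm_neg]
  rcases le_total ‖x - w‖ ‖x + w‖ with h | h
  · left; nlinarith [norm_nonneg (x - w)]
  · right; nlinarith [norm_nonneg (x + w)]

theorem norm_one_add_cpow_half_le {w : ℂ} (hw : ‖w‖ ≤ 3) : ‖(1 + w) ^ (1 / 2 : ℂ)‖ ≤ 2 := by
  have hsq : ‖(1 + w) ^ (1 / 2 : ℂ)‖ ^ 2 ≤ 2 ^ 2 := by
    rw [← norm_pow, one_div, ← Nat.cast_ofNat, Complex.cpow_nat_inv_pow _ two_ne_zero]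
    exact (norm_add_le _ _).trans (by rw [norm_one]; linarith)
  exact (sq_le_sq₀ (norm_nonneg _) zero_le_two).1 hsq

/-- With `a * c + 1 = s ^ 2` and `a * d + 1 = x ^ 2`, one of `± b * s * x` approximates `a * b * z`
times the square root of `1 + b / (a * b * c) = s ^ 2 / (a * c)`. -/
theorem norm_sub_mul_cpow_mul_norm_le_or {a b c d s x z : ℂ} (ha : 1 ≤ ‖a‖) (hb : b ≠ 0)
    (hac : ‖a‖ ≤ ‖c‖) (hc : 2 ≤ ‖c‖) (hs : a * c + 1 = s ^ 2) (hx : a * d + 1 = x ^ 2)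
    (hz : z ^ 2 = c * d + 1) :
    ‖b * s * x - a * b * z * (1 + b / (a * b * c)) ^ (1 / 2 : ℂ)‖ * ‖z‖ ≤ 4 * ‖b‖ * ‖c‖ ∨
      ‖-(b * s * x) - a * b * z * (1 + b / (a * b * c)) ^ (1 / 2 : ℂ)‖ * ‖z‖ ≤
        4 * ‖b‖ * ‖c‖ := by
  have ha0 : a ≠ 0 := norm_pos_iff.1 (by linarith)
  have hc0 : c ≠ 0 := norm_pos_iff.1 (by linarith)
  have hratio : b / (a * b * c) = (a * c)⁻¹ := by field_simp
  have hsmall : ‖(a * c)⁻¹‖ ≤ 1 / 2 := by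
    rw [norm_inv, norm_mul, one_div]
    exact inv_anti₀ two_pos (by nlinarith)
  rw [hratio]
  set θ := (1 + (a * c)⁻¹) ^ (1 / 2 : ℂ) with hθ
  have hθsq : θ ^ 2 = 1 + (a * c)⁻¹ := by
    rw [hθ, one_div, ← Nat.cast_ofNat, Complex.cpow_nat_inv_pow _ two_ne_zero]
  have hθle : ‖θ‖ ≤ 2 := norm_one_add_cpow_half_le (by linarith)
  have hθ0 : θ ≠ 0 := fun h => by
    rw [h, zero_pow two_ne_zero] at hθsq
    rw [← neg_eq_of_add_eq_zero_right hθsq.symm, norm_neg, norm_one] at hsmall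
    norm_num at hsmall
  have hdiff : (b * s * x) ^ 2 - (a * b * z * θ) ^ 2 = a * b ^ 2 * (c - a) * θ ^ 2 := by
    rw [mul_pow, mul_pow, ← hs, ← hx, mul_pow _ θ, mul_pow _ z, hz, hθsq]
    field_simp
    ring
  have hbound : ‖(b * s * x) ^ 2 - (a * b * z * θ) ^ 2‖ ≤
      4 * ‖b‖ * ‖c‖ * (‖a‖ * ‖b‖ * ‖θ‖) := by
    rw [hdiff, norm_mul, norm_mul, norm_mul, norm_pow, norm_pow]
    calc _ = ‖b‖ * ‖c - a‖ * ‖θ‖ * (‖a‖ * ‖b‖ * ‖θ‖) := by ring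
      _ ≤ ‖b‖ * (‖c‖ + ‖c‖) * 2 * (‖a‖ * ‖b‖ * ‖θ‖) := by
          gcongr
          exact norm_sub_le_of_le le_rfl hac
      _ = _ := by ring
  have hpos : 0 < ‖a‖ * ‖b‖ * ‖θ‖ := by positivity
  have hcancel (u : ℂ) : ‖u‖ * ‖a * b * z * θ‖ = ‖u‖ * ‖z‖ * (‖a‖ * ‖b‖ * ‖θ‖) := by
    rw [norm_mul, norm_mul, norm_mul]; ring
  refine (norm_sub_mul_norm_le_or (b * s * x) (a * b * z * θ)).imp ?_ ?_ <;>
  · intro h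
    rw [hcancel] at h
    exact le_of_mul_le_mul_right (h.trans hbound) hpos

variable {O : Subring ℂ} {a b c d z : O}

theorem exists_norm_sub_mul_cpow_mul_norm_le (ha : 1 ≤ ‖a‖) (hb : b ≠ 0) (hac : ‖a‖ ≤ ‖c‖)
    (hc : 2 ≤ ‖c‖) (hs : IsSquare (a * c + 1)) (hx : IsSquare (a * d + 1))
    (hz : z ^ 2 = c * d + 1) :
    ∃ u : O, ‖(u - ↑(a * b * z) * (1 + b / ↑(a * b * c)) ^ (1 / 2 : ℂ) : ℂ)‖ * ‖z‖ ≤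
      4 * ‖b‖ * ‖c‖ := by
  obtain ⟨s, hs⟩ := hs.exists_sq
  obtain ⟨x, hx⟩ := hx.exists_sq
  obtain h | h := norm_sub_mul_cpow_mul_norm_le_or (a := a) (b := b) (c := c) (d := d) (s := s)
    (x := x) (z := z) ha (Subtype.coe_ne_coe.2 hb) hac hc (mod_cast hs) (mod_cast hx)
    (mod_cast hz)
  · exact ⟨b * s * x, mod_cast h⟩
  · exact ⟨-(b * s * x), mod_cast h⟩

/-- Multiply `one_le_of_simultaneous_approx_pair` by `‖z‖`, and absorb all powers of `‖b‖` into
`g = 2048 * ‖b‖ ^ 9`. -/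
theorem norm_le_of_approx_pair (hO : ∀ u : O, u ≠ 0 → 1 ≤ ‖u‖) (ha : a ≠ 0) (hb : b ≠ 0)
    (hab : a ≠ b) (hab' : ‖a‖ ≤ ‖b‖) (hz : z ≠ 0) (hT : 4 * ‖b‖ ≤ ‖a * b * c‖) {u v : O}
    (hu : ‖(u - ↑(a * b * z) * (1 + b / ↑(a * b * c)) ^ (1 / 2 : ℂ) : ℂ)‖ * ‖z‖ ≤
      4 * ‖a * b * c‖)
    (hv : ‖(v - ↑(a * b * z) * (1 + a / ↑(a * b * c)) ^ (1 / 2 : ℂ) : ℂ)‖ * ‖z‖ ≤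
      4 * ‖a * b * c‖) (k : ℕ) :
    ‖z‖ ≤ 2048 * ‖b‖ ^ 9 * (2048 * ‖b‖ ^ 9 * ‖a * b * c‖) ^ k * ‖a * b * c‖ +
      2048 * ‖b‖ ^ 9 / 8 * (2048 * ‖b‖ ^ 9 / ‖a * b * c‖ ^ 2) ^ k * ‖z‖ ^ 2 := by
  have happrox := one_le_of_simultaneous_approx_pair hO hb ha hab.symm
    (mul_ne_zero (mul_ne_zero ha hb) hz) le_rfl hab' hT k (x := u) (y := v)
  set τ := ‖a * b * c‖
  have hb1 := hO b hb
  have hle5 : ‖b‖ ^ 5 ≤ ‖b‖ ^ 9 := pow_le_pow_right₀ hb1 (by norm_num)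
  have hle6 : ‖b‖ ^ 6 ≤ ‖b‖ ^ 9 := pow_le_pow_right₀ hb1 (by norm_num)
  have hle7 : ‖b‖ ^ 7 ≤ ‖b‖ ^ 9 := pow_le_pow_right₀ hb1 (by norm_num)
  have hpos9 : 0 < ‖b‖ ^ 9 := by positivity
  have habz : ‖a * b * z‖ ≤ ‖b‖ ^ 2 * ‖z‖ := by
    rw [norm_mul, norm_mul, pow_two]; gcongr
  calc ‖z‖ = 1 * ‖z‖ := (one_mul _).symm
    _ ≤ _ := mul_le_mul_of_nonneg_right happrox (norm_nonneg z)
    _ = 64 * ‖b‖ ^ 5 * (512 * ‖b‖ ^ 6 * τ) ^ k *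
          (‖(u - ↑(a * b * z) * (1 + b / ↑(a * b * c)) ^ (1 / 2 : ℂ) : ℂ)‖ * ‖z‖ +
          ‖(v - ↑(a * b * z) * (1 + a / ↑(a * b * c)) ^ (1 / 2 : ℂ) : ℂ)‖ * ‖z‖) +
        192 * ‖b‖ ^ 5 * (2048 * ‖b‖ ^ 9 / τ ^ 2) ^ k * ‖a * b * z‖ * ‖z‖ := by ring
    _ ≤ 64 * ‖b‖ ^ 5 * (512 * ‖b‖ ^ 6 * τ) ^ k * (4 * τ + 4 * τ) +
        192 * ‖b‖ ^ 5 * (2048 * ‖b‖ ^ 9 / τ ^ 2) ^ k * (‖b‖ ^ 2 * ‖z‖) * ‖z‖ := by gcongr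
    _ = 512 * ‖b‖ ^ 5 * (512 * ‖b‖ ^ 6 * τ) ^ k * τ +
        192 * ‖b‖ ^ 7 * (2048 * ‖b‖ ^ 9 / τ ^ 2) ^ k * ‖z‖ ^ 2 := by ring
    _ ≤ _ := by
        gcongr ?_ * (?_ * _) ^ k * _ + ?_ * _ * _
        all_goals linarith

theorem norm_le_pow_of_quadruple (hO : ∀ u : O, u ≠ 0 → 1 ≤ ‖u‖) (ha : a ≠ 0) (hb : b ≠ 0)
    (hab : a ≠ b) (hab' : ‖a‖ ≤ ‖b‖) (hbc : ‖b‖ ≤ ‖c‖) (hac_sq : IsSquare (a * c + 1))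
    (hbc_sq : IsSquare (b * c + 1)) (had_sq : IsSquare (a * d + 1)) (hbd_sq : IsSquare (b * d + 1))
    (hz : z ^ 2 = c * d + 1) (hbig : (2048 * ‖b‖ ^ 9) ^ 9 ≤ ‖a * b * c‖) :
    ‖z‖ ≤ ‖a * b * c‖ ^ 5 := by
  have ha1 := hO a ha
  have hb1 := hO b hb
  have hb9 : ‖b‖ ≤ ‖b‖ ^ 9 := le_self_pow₀ hb1 (by norm_num)
  have hg : 2048 * ‖b‖ ^ 9 ≤ ‖a * b * c‖ :=
    (le_self_pow₀ (by linarith) (by norm_num)).trans hbig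
  obtain rfl | hz0 := eq_or_ne z 0
  · rw [norm_zero]; positivity
  have habc : ‖a * b * c‖ = ‖a‖ * ‖b‖ * ‖c‖ := by rw [norm_mul, norm_mul]
  have hc2 : 2 ≤ ‖c‖ := by
    by_contra! h
    have hsmall : ‖a * b * c‖ ≤ 2 * 2 * 2 := by rw [habc]; gcongr <;> linarith
    linarith
  obtain ⟨u, hu⟩ :=
    exists_norm_sub_mul_cpow_mul_norm_le ha1 hb (hab'.trans hbc) hc2 hac_sq had_sq hz
  obtain ⟨v, hv⟩ := exists_norm_sub_mul_cpow_mul_norm_le hb1 ha hbc hc2 hbc_sq hbd_sq hz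
  rw [mul_comm b a] at hv
  refine le_pow_five_of_forall (by linarith) hbig
    (norm_le_of_approx_pair hO ha hb hab hab' hz0 (by linarith) (hu.trans ?_) (hv.trans ?_))
  · rw [habc]; nlinarith [norm_nonneg b, norm_nonneg c, mul_nonneg (norm_nonneg b) (norm_nonneg c)]
  · rw [habc]; nlinarith [norm_nonneg a, norm_nonneg c, mul_nonneg (norm_nonneg a) (norm_nonneg c)]

end UpperGap

section LowerGap

/-- The triples `{a, b, a + b + 2 * r}` with `r ^ 2 = a * b + 1`, usually called regular; these are
the ones whose elements need not grow. -/
def IsRegularTriple {R : Type*} [CommRing R] (a b c : R) : Prop :=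
  (c - a - b) ^ 2 = 4 * (a * b + 1)

variable {O : Subring ℂ}

theorem norm_ofNat_of_subring (n : ℕ) [n.AtLeastTwo] : ‖(ofNat(n) : O)‖ = ofNat(n) :=
  Complex.norm_ofNat n

variable {a b c d : O}

theorem norm_sub_sub_sq_sub_le (hac : ‖a‖ ≤ ‖c‖) (hbc : ‖b‖ ≤ ‖c‖) :
    ‖(c - a - b) ^ 2 - 4 * (a * b + 1)‖ ≤ 9 * ‖c‖ ^ 2 + 4 := by
  have hsub {x y z : O} (hx : ‖x‖ ≤ ‖c‖) (hy : ‖y‖ ≤ ‖c‖) (hz : ‖z‖ ≤ ‖c‖) :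
      ‖x * (x - y - z)‖ ≤ ‖c‖ * (‖c‖ + ‖c‖ + ‖c‖) := by
    rw [norm_mul]
    gcongr
    exact norm_sub_le_of_le (norm_sub_le_of_le hx hy) hz
  calc _ = ‖a * (a - b - c) + b * (b - c - a) + c * (c - a - b) - 4‖ := by ring_nf
    _ ≤ ‖c‖ * (‖c‖ + ‖c‖ + ‖c‖) + ‖c‖ * (‖c‖ + ‖c‖ + ‖c‖) + ‖c‖ * (‖c‖ + ‖c‖ + ‖c‖) + 4 :=
        norm_sub_le_of_le (norm_add_le_of_le (norm_add_le_of_le (hsub hac hbc le_rfl)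
          (hsub hbc le_rfl hac)) (hsub le_rfl hac hbc)) (norm_ofNat_of_subring 4).le
    _ = _ := by ring

/-- The elements `m ± 2 * r * s * t`, with `m = a + b + c + 2 * a * b * c`, have product
`(c - a - b) ^ 2 - 4 * (a * b + 1)`, of size `O(‖c‖ ^ 2)`; when it is nonzero their sum, essentially
`4 * a * b * c`, has at most that size. -/
theorem isRegularTriple_or_four_mul_norm_mul_norm_le (hO : ∀ u : O, u ≠ 0 → 1 ≤ ‖u‖)
    (hab : IsSquare (a * b + 1)) (hac : IsSquare (a * c + 1)) (hbc : IsSquare (b * c + 1))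
    (hc : 1 ≤ ‖c‖) (hac' : ‖a‖ ≤ ‖c‖) (hbc' : ‖b‖ ≤ ‖c‖) :
    IsRegularTriple a b c ∨ 4 * (‖a‖ * ‖b‖) ≤ 9 * ‖c‖ + 11 := by
  obtain ⟨r, hr⟩ := hab.exists_sq
  obtain ⟨s, hs⟩ := hac.exists_sq
  obtain ⟨t, ht⟩ := hbc.exists_sq
  set P := a + b + c + 2 * (a * b * c) + 2 * (r * s * t) with hP
  set Q := a + b + c + 2 * (a * b * c) - 2 * (r * s * t) with hQ
  have hPQ : P * Q = (c - a - b) ^ 2 - 4 * (a * b + 1) := by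
    linear_combination (4 * (b * c + 1) * s ^ 2) * hr + 4 * (b * c + 1) * (a * b + 1) * hs +
      4 * r ^ 2 * s ^ 2 * ht
  refine or_iff_not_imp_left.2 fun hreg => ?_
  have hne : P * Q ≠ 0 := by rwa [hPQ, sub_ne_zero]
  have hP1 := hO P (left_ne_zero_of_mul hne)
  have hQ1 := hO Q (right_ne_zero_of_mul hne)
  have hprod : ‖P‖ * ‖Q‖ ≤ 9 * ‖c‖ ^ 2 + 4 := by
    rw [← norm_mul, hPQ]
    exact norm_sub_sub_sq_sub_le hac' hbc'
  have hsum : 4 * (‖a‖ * ‖b‖ * ‖c‖) ≤ ‖P‖ + ‖Q‖ + 2 * (‖c‖ + ‖c‖ + ‖c‖) := by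
    calc _ = ‖P + Q - 2 * (a + b + c)‖ := by
          rw [hP, hQ, ← norm_mul, ← norm_mul, ← norm_ofNat_of_subring (O := O), ← norm_mul]
          ring_nf
      _ ≤ _ := by
          refine norm_sub_le_of_le (norm_add_le _ _) ?_
          rw [norm_mul, norm_ofNat_of_subring]
          gcongr
          exact norm_add_le_of_le (norm_add_le_of_le hac' hbc') le_rfl
  refine le_of_mul_le_mul_right (a := ‖c‖) ?_ (by linarith)
  nlinarith [mul_nonneg (sub_nonneg.2 hP1) (sub_nonneg.2 hQ1)]

theorem sub_sq_eq_mul_add_four_of_isRegularTriple {R : Type*} [CommRing R] [IsDomain R]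
    {a b c d : R} (hne : a ≠ b) (hacd : IsRegularTriple a c d) (hbcd : IsRegularTriple b c d) :
    (d - c) ^ 2 = a * b + 4 := by
  rw [IsRegularTriple] at hacd hbcd
  have hb : b = 2 * d + 2 * c - a := by
    refine mul_left_cancel₀ (sub_ne_zero.2 hne) ?_
    linear_combination hacd - hbcd
  rw [hb]
  linear_combination hacd

theorem norm_le_two_of_sq_eq_add_three (hO : ∀ u : O, u ≠ 0 → 1 ≤ ‖u‖) {w r : O}
    (h : w ^ 2 = r ^ 2 + 3) : ‖w‖ ≤ 2 := by
  have hprod : (w - r) * (w + r) = 3 := by linear_combination h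
  have hne : (w - r) * (w + r) ≠ 0 := by rw [hprod]; norm_num
  have hnorm : ‖w - r‖ * ‖w + r‖ = 3 := by rw [← norm_mul, hprod, norm_ofNat_of_subring]
  have hsum : 2 * ‖w‖ ≤ ‖w - r‖ + ‖w + r‖ := by
    rw [← norm_ofNat_of_subring (O := O), ← norm_mul, show 2 * w = w - r + (w + r) by ring]
    exact norm_add_le _ _
  nlinarith [mul_nonneg (sub_nonneg.2 (hO _ (left_ne_zero_of_mul hne)))
    (sub_nonneg.2 (hO _ (right_ne_zero_of_mul hne)))]

theorem four_mul_norm_mul_norm_le_of_quadruple (hO : ∀ u : O, u ≠ 0 → 1 ≤ ‖u‖) (hne : a ≠ b)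
    (hab : IsSquare (a * b + 1)) (hac : IsSquare (a * c + 1)) (had : IsSquare (a * d + 1))
    (hbc : IsSquare (b * c + 1)) (hbd : IsSquare (b * d + 1)) (hcd : IsSquare (c * d + 1))
    (ha : 3 ≤ ‖a‖) (hab' : ‖a‖ ≤ ‖b‖) (hbc' : ‖b‖ ≤ ‖c‖) (hcd' : ‖c‖ ≤ ‖d‖) :
    4 * (‖a‖ * ‖c‖) ≤ 9 * ‖d‖ + 11 := by
  by_contra! hlt
  have hacd : IsRegularTriple a c d :=
    (isRegularTriple_or_four_mul_norm_mul_norm_le hO hac had hcd (by linarith) (by linarith)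
      hcd').resolve_right hlt.not_ge
  have hbcd : IsRegularTriple b c d :=
    (isRegularTriple_or_four_mul_norm_mul_norm_le hO hbc hbd hcd (by linarith) (by linarith)
      hcd').resolve_right (hlt.trans_le (by gcongr)).not_ge
  obtain ⟨r, hr⟩ := hab.exists_sq
  have hdc : ‖d - c‖ ≤ 2 := norm_le_two_of_sq_eq_add_three hO (r := r) (by
    rw [sub_sq_eq_mul_add_four_of_isRegularTriple hne hacd hbcd, ← hr]; ring)
  have hupper : ‖d - a - c‖ ≤ 2 + ‖a‖ := by
    rw [sub_right_comm]
    exact norm_sub_le_of_le hdc le_rfl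
  have hlower : 4 * (‖a‖ * ‖c‖ - 1) ≤ ‖d - a - c‖ ^ 2 := by
    rw [← norm_pow, hacd, norm_mul, norm_ofNat_of_subring, ← norm_mul]
    gcongr
    simpa using norm_sub_le (a * c + 1) 1
  nlinarith [norm_nonneg (d - a - c)]

theorem four_mul_norm_mul_norm_le_of_quadruple_of_ten_le (hO : ∀ u : O, u ≠ 0 → 1 ≤ ‖u‖)
    (hne : a ≠ b) (hab : IsSquare (a * b + 1)) (hac : IsSquare (a * c + 1))
    (had : IsSquare (a * d + 1)) (hbc : IsSquare (b * c + 1)) (hbd : IsSquare (b * d + 1))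
    (hcd : IsSquare (c * d + 1)) (ha : 10 ≤ ‖a‖) (hab' : ‖a‖ ≤ ‖b‖) (hbc' : ‖b‖ ≤ ‖c‖)
    (hcd' : ‖c‖ ≤ ‖d‖) : 4 * (‖b‖ * ‖c‖) ≤ 9 * ‖d‖ + 11 := by
  refine (isRegularTriple_or_four_mul_norm_mul_norm_le hO hbc hbd hcd (by linarith)
    (hbc'.trans hcd') hcd').resolve_left fun hreg => ?_
  have hgap := four_mul_norm_mul_norm_le_of_quadruple hO hne hab hac had hbc hbd hcd
    (by linarith) hab' hbc' hcd'
  have hsq : ‖d - b - c‖ ^ 2 ≤ (2 * (‖c‖ + 1)) ^ 2 := by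
    rw [← norm_pow, hreg, norm_mul, norm_ofNat_of_subring]
    calc _ ≤ 4 * (‖c‖ * ‖c‖ + 1) := by
          gcongr
          refine norm_add_le_of_le ?_ norm_one.le
          rw [norm_mul]; gcongr
      _ ≤ _ := by nlinarith [norm_nonneg c]
  have hd : ‖d‖ ≤ 2 * (‖c‖ + 1) + ‖b‖ + ‖c‖ := by
    rw [show d = d - b - c + b + c by ring]
    exact norm_add_le_of_le (norm_add_le_of_le (abs_le_of_sq_le_sq' hsq (by positivity)).2 le_rfl)
      le_rfl
  nlinarith

end LowerGap

section Growth

theorem pow_fib_mul_pow_fib_le {y : ℕ → ℝ} {N : ℕ} (hpos : ∀ n, 0 ≤ y n)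
    (h : ∀ n, n + 2 < N → y n * y (n + 1) ≤ y (n + 2)) (n : ℕ) (hn : n + 1 < N) :
    y 0 ^ Nat.fib n * y 1 ^ Nat.fib (n + 1) ≤ y (n + 1) := by
  induction n using Nat.twoStepInduction with
  | zero => simp
  | one => simpa using h 0 hn
  | more n ih₁ ih₂ =>
    calc _ = (y 0 ^ Nat.fib n * y 1 ^ Nat.fib (n + 1)) *
          (y 0 ^ Nat.fib (n + 1) * y 1 ^ Nat.fib (n + 2)) := by
          rw [Nat.fib_add_two (n := n + 1), Nat.fib_add_two, pow_add, pow_add, pow_add]; ring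
      _ ≤ y (n + 1) * y (n + 2) :=
          mul_le_mul (ih₁ (by lia)) (ih₂ (by lia))
            (mul_nonneg (pow_nonneg (hpos _) _) (pow_nonneg (hpos _) _)) (hpos _)
      _ ≤ _ := h (n + 1) hn

theorem ten_le_and_thirty_five_le_of_gap {x : ℕ → ℝ} (h4 : ∀ n, 4 ≤ x n)
    (h : ∀ n < 4, 4 * (x n * x (n + 2)) ≤ 9 * x (n + 3) + 11) : 10 ≤ x 5 ∧ 35 ≤ x 6 := by
  have h3 : 53 / 9 ≤ x 3 := by nlinarith [h 0 (by norm_num), h4 0, h4 2]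
  have h4' : 9 ≤ x 4 := by nlinarith [h 1 (by norm_num), h4 1]
  have h5 : 14 ≤ x 5 := by nlinarith [h 2 (by norm_num), h4 2]
  exact ⟨by linarith, by nlinarith [h 3 (by norm_num)]⟩

theorem pow_nine_le_of_pow_mul_pow_le {u v w : ℝ} (hu : 35 / 3 ≤ u) (hv : 35 / 3 ≤ v)
    (hw : u ^ 55 * v ^ 89 ≤ w) : (2048 * (3 * v) ^ 9) ^ 9 ≤ 3 * u * (3 * v) * (3 * w) := by
  calc (2048 * (3 * v) ^ 9) ^ 9 = 27 * (2 ^ 99 * 3 ^ 78) * v ^ 81 := by ring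
    _ ≤ 27 * ((35 / 3) ^ 56 * (35 / 3) ^ 9) * v ^ 81 := by gcongr ?_ * _; norm_num
    _ ≤ 27 * (u ^ 56 * v ^ 9) * v ^ 81 := by gcongr
    _ = 27 * u * v * (u ^ 55 * v ^ 89) := by ring
    _ ≤ 27 * u * v * w := by gcongr
    _ = _ := by ring

theorem pow_ten_add_one_lt_of_pow_mul_pow_le {u v w d : ℝ} (hu : 35 / 3 ≤ u) (hv : 35 / 3 ≤ v)
    (hw : u ^ 55 * v ^ 89 ≤ w) (hd : w ^ 13 ≤ d) :
    (3 * u * (3 * v) * (3 * w)) ^ 10 + 1 < 3 * w * (3 * d) := by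
  have huv : 27 ≤ u * v := by nlinarith
  have hw20 : (u * v) ^ 20 ≤ w := by
    refine le_trans ?_ hw
    rw [mul_pow]
    gcongr <;> linarith
  have hw1 : 1 ≤ w := le_trans (one_le_pow₀ (by linarith)) hw20
  have hpow : (3 * u * (3 * v) * (3 * w)) ^ 10 ≤ w ^ 14 := by
    calc _ = 27 ^ 10 * (u * v) ^ 10 * w ^ 10 := by ring
      _ ≤ (u * v) ^ 10 * (u * v) ^ 10 * w ^ 10 := by gcongr
      _ = (u * v) ^ 20 * w ^ 10 := by ring
      _ ≤ w * w ^ 10 := by gcongr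
      _ = w ^ 11 := by ring
      _ ≤ w ^ 14 := pow_le_pow_right₀ hw1 (by norm_num)
  calc _ ≤ w ^ 14 + w ^ 14 := add_le_add hpow (one_le_pow₀ hw1)
    _ < 9 * w ^ 14 := by linarith [one_le_pow₀ hw1 (n := 14)]
    _ = 3 * w * (3 * w ^ 13) := by ring
    _ ≤ _ := by gcongr

/-- From index `6` on, the numbers `x n / 3` grow at least like the exponentials of the
Fibonacci numbers. -/
theorem false_of_gaps {x : ℕ → ℝ} (h4 : ∀ n, 4 ≤ x n) (hmono : Monotone x)
    (hgap : ∀ n, n + 3 < 24 → 4 * (x n * x (n + 2)) ≤ 9 * x (n + 3) + 11)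
    (hgap' : ∀ n, n + 3 < 24 → 10 ≤ x n → 4 * (x (n + 1) * x (n + 2)) ≤ 9 * x (n + 3) + 11)
    (hupper : (2048 * x 7 ^ 9) ^ 9 ≤ x 6 * x 7 * x 17 →
      x 17 * x 23 ≤ (x 6 * x 7 * x 17) ^ 10 + 1) : False := by
  obtain ⟨h5, h6⟩ := ten_le_and_thirty_five_le_of_gap h4 fun n hn => hgap n (by lia)
  set y : ℕ → ℝ := fun n => x n / 3 with hy
  have hxy (n : ℕ) : x n = 3 * y n := by rw [hy]; ring
  have hpos (n : ℕ) : 0 ≤ y n := by linarith [h4 n, hxy n]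
  have hbase (n : ℕ) (hn : 6 ≤ n) : 35 / 3 ≤ y n := by linarith [hmono hn, hxy n]
  have hrec (n : ℕ) (hn : n + 8 < 24) : y (n + 6) * y (n + 7) ≤ y (n + 8) := by
    have h := hgap' (n + 5) (by lia) (h5.trans (hmono (by lia)))
    rw [hxy, hxy, hxy] at h
    nlinarith [hbase (n + 6) (by lia), hbase (n + 7) (by lia)]
  have h17 : y 6 ^ 55 * y 7 ^ 89 ≤ y 17 :=
    pow_fib_mul_pow_fib_le (y := fun n => y (n + 6)) (N := 18) (fun n => hpos _)
      (fun n hn => hrec n (by lia)) 10 (by norm_num)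
  have h23 : y 16 ^ 8 * y 17 ^ 13 ≤ y 23 :=
    pow_fib_mul_pow_fib_le (y := fun n => y (n + 16)) (N := 8) (fun n => hpos _)
      (fun n hn => hrec (n + 10) (by lia)) 6 (by norm_num)
  have hd : y 17 ^ 13 ≤ y 23 :=
    (le_mul_of_one_le_left (pow_nonneg (hpos _) _)
      (one_le_pow₀ (by linarith [hbase 16 (by norm_num)]))).trans h23
  rw [hxy 6, hxy 7, hxy 17, hxy 23] at hupper
  exact (hupper (pow_nine_le_of_pow_mul_pow_le (hbase 6 le_rfl) (hbase 7 (by norm_num)) h17)).not_gt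
    (pow_ten_add_one_lt_of_pow_mul_pow_le (hbase 6 le_rfl) (hbase 7 (by norm_num)) h17 hd)

end Growth

section LargeElements

/-- Diophantine sets: the product of any two distinct elements is one less than a square. -/
def IsDiophantine {R : Type*} [CommSemiring R] (S : Finset R) : Prop :=
  (S : Set R).Pairwise fun u v => IsSquare (u * v + 1)

theorem IsDiophantine.mono {R : Type*} [CommSemiring R] {S T : Finset R} (hT : IsDiophantine T)
    (h : S ⊆ T) : IsDiophantine S :=
  Set.Pairwise.mono (Finset.coe_subset.2 h) hT

theorem IsDiophantine.map {R A : Type*} [CommSemiring R] [CommSemiring A] {S : Finset R}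
    (hS : IsDiophantine S) {φ : R →+* A} (hφ : Function.Injective φ) :
    IsDiophantine (S.map ⟨φ, hφ⟩) := by
  rw [IsDiophantine, Finset.coe_map]
  rintro _ ⟨u, hu, rfl⟩ _ ⟨v, hv, rfl⟩ huv
  simpa using (hS hu hv (ne_of_apply_ne φ huv)).map φ

theorem exists_monotone_seq_of_lt_card {α β : Type*} [LinearOrder β] (φ : α → β) {S : Finset α}
    {N : ℕ} (h : N < S.card) : ∃ X : ℕ → α, (∀ n, X n ∈ S) ∧ Monotone (φ ∘ X) ∧
      Set.InjOn X (Set.Iic N) := by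
  let e := S.equivFin.symm
  let ψ : Fin S.card → β := fun i => φ (e i)
  let ι : ℕ → Fin S.card := fun n => ⟨min n N, by lia⟩
  have hι : Monotone ι := fun m n hmn => Fin.mk_le_mk.2 (min_le_min_right N hmn)
  refine ⟨fun n => e (Tuple.sort ψ (ι n)), fun n => (e _).2, (Tuple.monotone_sort ψ).comp hι,
    fun i hi j hj hij => ?_⟩
  have hij' := (Tuple.sort ψ).injective (e.injective (Subtype.ext hij))
  simpa [ι, Set.mem_Iic.1 hi, Set.mem_Iic.1 hj] using hij'

theorem card_le_of_four_le_norm {O : Subring ℂ} (hO : ∀ u : O, u ≠ 0 → 1 ≤ ‖u‖) {S : Finset O}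
    (hS : IsDiophantine S) (h4 : ∀ u ∈ S, 4 ≤ ‖u‖) : S.card ≤ 23 := by
  by_contra! hcard
  obtain ⟨X, hXS, hmono, hinj⟩ := exists_monotone_seq_of_lt_card norm hcard
  replace h4 (n : ℕ) : 4 ≤ ‖X n‖ := h4 _ (hXS n)
  have hne {i j : ℕ} (hij : i < j) (hj : j ≤ 23) : X i ≠ X j :=
    fun h => hij.ne (hinj (hij.le.trans hj) hj h)
  have hsq {i j : ℕ} (hij : i < j) (hj : j ≤ 23) : IsSquare (X i * X j + 1) :=
    hS (hXS i) (hXS j) (hne hij hj)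
  have hX0 (n : ℕ) : X n ≠ 0 := norm_pos_iff.1 (by linarith [h4 n])
  have hstep (n : ℕ) : ‖X n‖ ≤ ‖X (n + 1)‖ := hmono n.le_succ
  refine false_of_gaps (x := fun n => ‖X n‖) h4 hmono (fun n hn => ?_) (fun n hn h10 => ?_)
    fun hbig => ?_
  · exact four_mul_norm_mul_norm_le_of_quadruple (b := X (n + 1)) hO (hne (by lia) (by lia))
      (hsq (by lia) (by lia)) (hsq (by lia) (by lia)) (hsq (by lia) (by lia))
      (hsq (by lia) (by lia)) (hsq (by lia) (by lia)) (hsq (by lia) (by lia))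
      (by linarith [h4 n]) (hstep _) (hstep _) (hstep _)
  · exact four_mul_norm_mul_norm_le_of_quadruple_of_ten_le (a := X n) hO (hne (by lia) (by lia))
      (hsq (by lia) (by lia)) (hsq (by lia) (by lia)) (hsq (by lia) (by lia))
      (hsq (by lia) (by lia)) (hsq (by lia) (by lia)) (hsq (by lia) (by lia))
      h10 (hstep _) (hstep _) (hstep _)
  · obtain ⟨z, hz⟩ := (hsq (by norm_num : 17 < 23) le_rfl).exists_sq
    simp only [← norm_mul] at hbig ⊢
    have hz5 : ‖z‖ ≤ ‖X 6 * X 7 * X 17‖ ^ 5 :=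
      norm_le_pow_of_quadruple hO (hX0 6) (hX0 7) (hne (by lia) (by lia)) (hstep 6)
        (hmono (by norm_num)) (hsq (by lia) (by lia)) (hsq (by lia) (by lia))
        (hsq (by lia) (by lia)) (hsq (by lia) (by lia)) hz.symm hbig
    calc ‖X 17 * X 23‖ = ‖z ^ 2 - 1‖ := by rw [← hz, add_sub_cancel_right]
      _ ≤ ‖z‖ ^ 2 + 1 := norm_sub_le_of_le (norm_pow z 2).le norm_one.le
      _ ≤ (‖X 6 * X 7 * X 17‖ ^ 5) ^ 2 + 1 := by gcongr
      _ = _ := by ring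

end LargeElements

section SmallElements

open QuadraticAlgebra

variable {c e : ℤ}

theorem four_mul_norm_sub_sq (z : QuadraticAlgebra ℤ (-c) e) :
    4 * z.norm - (2 * z.re + e * z.im) ^ 2 = (4 * c - e ^ 2) * z.im ^ 2 := by
  rw [norm_def]
  ring

theorem four_mul_mul_norm_sub_sq (z : QuadraticAlgebra ℤ (-c) e) :
    4 * c * z.norm - (2 * c * z.im + e * z.re) ^ 2 = (4 * c - e ^ 2) * z.re ^ 2 := by
  rw [norm_def]
  ring

/-- The elements of norm at most `n` in the box `|re|, |im| ≤ 4`; for `n ≤ 16` and positive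
definite norm this is the whole norm ball. -/
noncomputable def normBall (c e n : ℤ) : Finset (QuadraticAlgebra ℤ (-c) e) :=
  {z ∈ (Finset.Icc (-4) 4 ×ˢ Finset.Icc (-4) 4).map (equivProd (-c) e).symm.toEmbedding |
    z.norm ≤ n}

/-- A colouring for which no two distinct small elements of the same colour form a Diophantine
pair. Both cases, the class modulo a sublattice of index `17` and the class modulo `3`, were found
by computer search. -/
def colour (z : QuadraticAlgebra ℤ (-c) e) : ℤ :=
  if e = 0 then (z.im - 3 * z.re) % 17 else 3 * (z.re % 3) + z.im % 3

theorem colour_mem_Ico (z : QuadraticAlgebra ℤ (-c) e) : colour z ∈ Finset.Ico 0 17 := by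
  rw [Finset.mem_Ico, colour]
  split <;> lia

theorem mul_add_one_ne_mul_self_of_colour_eq : ∀ e ∈ ({0, 1} : Finset ℤ),
    ∀ c ∈ Finset.Icc (1 : ℤ) 16, ∀ z ∈ normBall c e 15, z ≠ 0 → ∀ z' ∈ normBall c e 15, z' ≠ 0 →
      z ≠ z' → colour z = colour z' → ∀ w ∈ normBall c e 16, z * z' + 1 ≠ w * w := by
  decide +kernel

theorem three_mul_le_four_mul_sub_sq (hc : 1 ≤ c) (he : e = 0 ∨ e = 1) :
    3 * c ≤ 4 * c - e ^ 2 := by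
  rcases he with rfl | rfl <;> lia

theorem quadraticAlgebra_norm_nonneg (hc : 1 ≤ c) (he : e = 0 ∨ e = 1)
    (z : QuadraticAlgebra ℤ (-c) e) : 0 ≤ z.norm := by
  nlinarith [four_mul_norm_sub_sq z, sq_nonneg (2 * z.re + e * z.im), sq_nonneg z.im,
    three_mul_le_four_mul_sub_sq hc he]

theorem eq_zero_of_quadraticAlgebra_norm_eq_zero (hc : 1 ≤ c) (he : e = 0 ∨ e = 1)
    {z : QuadraticAlgebra ℤ (-c) e} (hz : z.norm = 0) : z = 0 := by
  have hdisc := three_mul_le_four_mul_sub_sq hc he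
  have him : z.im = 0 := by
    by_contra hne
    nlinarith [four_mul_norm_sub_sq z, sq_nonneg (2 * z.re + e * z.im), sq_pos_of_ne_zero hne]
  have hre : z.re = 0 := by simpa [norm_def, him] using hz
  exact QuadraticAlgebra.ext hre him

theorem mem_normBall (hc : 1 ≤ c) (he : e = 0 ∨ e = 1) {n : ℤ} (hn : n ≤ 16)
    {z : QuadraticAlgebra ℤ (-c) e} (hz : z.norm ≤ n) : z ∈ normBall c e n := by
  have hdisc := three_mul_le_four_mul_sub_sq hc he
  have him : z.im ^ 2 < 5 ^ 2 := by
    nlinarith [four_mul_norm_sub_sq z, sq_nonneg (2 * z.re + e * z.im), sq_nonneg z.im]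
  have hre : c * z.re ^ 2 < c * 5 ^ 2 := by
    nlinarith [four_mul_mul_norm_sub_sq z, sq_nonneg (2 * c * z.im + e * z.re), sq_nonneg z.re]
  have him' := abs_lt.1 (abs_lt_of_sq_lt_sq him (by norm_num))
  have hre' := abs_lt.1 (abs_lt_of_sq_lt_sq (lt_of_mul_lt_mul_left hre (by lia)) (by norm_num))
  refine Finset.mem_filter.2 ⟨Finset.mem_map.2 ⟨(z.re, z.im), ?_, rfl⟩, hz⟩
  simp only [Finset.mem_product, Finset.mem_Icc]
  lia

theorem norm_add_one_le (hc : 1 ≤ c) (he : e = 0 ∨ e = 1) {z : QuadraticAlgebra ℤ (-c) e} {k : ℤ}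
    (hk : 0 ≤ k) (hz : z.norm ≤ k ^ 2) : (z + 1).norm ≤ (k + 1) ^ 2 := by
  have hdisc := three_mul_le_four_mul_sub_sq hc he
  have htrace : (2 * z.re + e * z.im) ^ 2 ≤ (2 * k) ^ 2 := by
    nlinarith [four_mul_norm_sub_sq z, sq_nonneg z.im]
  calc (z + 1).norm = z.norm + (2 * z.re + e * z.im) + 1 := by
        simp only [norm_def, re_add, im_add, re_one, im_one]
        ring
    _ ≤ k ^ 2 + 2 * k + 1 := by
        gcongr
        exact le_of_abs_le (abs_le_of_sq_le_sq htrace (by lia))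
    _ = _ := by ring

theorem colour_injOn_of_isDiophantine (hc : 1 ≤ c) (hc' : c ≤ 16) (he : e = 0 ∨ e = 1)
    {S : Finset (QuadraticAlgebra ℤ (-c) e)} (hS : IsDiophantine S) (h0 : ∀ z ∈ S, z ≠ 0)
    (hsmall : ∀ z ∈ S, z.norm ≤ 15) : Set.InjOn colour (S : Set (QuadraticAlgebra ℤ (-c) e)) := by
  intro z hz z' hz' hcolour
  by_contra hne
  obtain ⟨w, hw⟩ := hS hz hz' hne
  have hzz' : (z * z').norm ≤ 15 ^ 2 := by
    rw [map_mul, sq]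
    exact mul_le_mul (hsmall z hz) (hsmall z' hz') (quadraticAlgebra_norm_nonneg hc he z')
      (by norm_num)
  have hw16 : w.norm ≤ 16 := by
    have h := norm_add_one_le hc he (by norm_num) hzz'
    rw [hw, map_mul, ← sq] at h
    exact le_of_abs_le (abs_le_of_sq_le_sq h (by norm_num))
  exact mul_add_one_ne_mul_self_of_colour_eq e (by simpa using he) c (Finset.mem_Icc.2 ⟨hc, hc'⟩)
    z (mem_normBall hc he (by norm_num) (hsmall z hz)) (h0 z hz)
    z' (mem_normBall hc he (by norm_num) (hsmall z' hz')) (h0 z' hz') hne hcolour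
    w (mem_normBall hc he le_rfl hw16) hw

theorem card_le_of_norm_le (hc : 1 ≤ c) (he : e = 0 ∨ e = 1)
    {S : Finset (QuadraticAlgebra ℤ (-c) e)} (hS : IsDiophantine S) (h0 : ∀ z ∈ S, z ≠ 0)
    (hsmall : ∀ z ∈ S, z.norm ≤ 15) : S.card ≤ 17 := by
  rcases le_or_gt c 16 with hc' | hc'
  · simpa using Finset.card_le_card_of_injOn colour (fun z _ => colour_mem_Ico z)
      (colour_injOn_of_isDiophantine hc hc' he hS h0 hsmall)
  · have him (z) (hz : z ∈ S) : z.im = 0 := by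
      have h : (4 * c - e ^ 2) * z.im ^ 2 ≤ 4 * 15 := by
        nlinarith [four_mul_norm_sub_sq z, sq_nonneg (2 * z.re + e * z.im), hsmall z hz]
      have hdisc : 67 ≤ 4 * c - e ^ 2 := by rcases he with rfl | rfl <;> lia
      by_contra hne
      nlinarith [sq_pos_of_ne_zero hne]
    have hre (z) (hz : z ∈ S) : z.re ∈ Finset.Icc (-3) 3 := by
      have h : z.re ^ 2 < 4 ^ 2 := by
        have := hsmall z hz
        rw [norm_def, him z hz] at this
        linarith
      have := abs_lt.1 (abs_lt_of_sq_lt_sq h (by norm_num))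
      rw [Finset.mem_Icc]
      lia
    refine (Finset.card_le_card_of_injOn _ hre fun z hz z' hz' h => ?_).trans (by simp)
    exact QuadraticAlgebra.ext h ((him z hz).trans (him z' hz').symm)

end SmallElements

section QuadraticOrder

theorem exists_int_two_mul_re {O : Subring ℂ} (hO : ∀ u ∈ O, ∃ n : ℤ, Complex.normSq u = n)
    {u : ℂ} (hu : u ∈ O) : ∃ t : ℤ, 2 * u.re = t := by
  obtain ⟨n, hn⟩ := hO u hu
  obtain ⟨n', hn'⟩ := hO (u + 1) (add_mem hu O.one_mem)
  refine ⟨n' - n - 1, ?_⟩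
  rw [Complex.normSq_add, Complex.normSq_one, map_one, mul_one] at hn'
  push_cast
  linarith

theorem exists_int_of_im_eq_zero {O : Subring ℂ} (hO : ∀ u ∈ O, ∃ n : ℤ, Complex.normSq u = n)
    {u : ℂ} (hu : u ∈ O) (him : u.im = 0) : ∃ x : ℤ, u = x := by
  obtain ⟨t, ht⟩ := exists_int_two_mul_re hO hu
  obtain ⟨n, hn⟩ := hO u hu
  rw [Complex.normSq_apply, him, mul_zero, add_zero] at hn
  have htn : t * t = 4 * n := by
    have : (t * t : ℝ) = 4 * n := by rw [← ht, ← hn]; ring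
    exact_mod_cast this
  obtain ⟨x, rfl⟩ : Even t := by
    have : Even (t * t) := ⟨2 * n, by lia⟩
    simpa [Int.even_mul] using this
  refine ⟨x, Complex.ext ?_ (by simpa using him)⟩
  push_cast at ht
  simpa using (by linarith : u.re = x)

theorem exists_generator_im {O : Subring ℂ} (hO : ∀ u ∈ O, ∃ n : ℤ, Complex.normSq u = n) :
    ∃ w ∈ O, ∀ u ∈ O, ∃ y : ℤ, u.im = y * w.im := by
  have hgap : Disjoint (O.toAddSubgroup.map Complex.imAddGroupHom : Set ℝ) (Set.Ioo 0 (1 / 2)) := by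
    rw [Set.disjoint_left]
    rintro _ ⟨u, hu, rfl⟩ ⟨h0, h1⟩
    obtain ⟨t, ht⟩ := exists_int_two_mul_re hO hu
    obtain ⟨n, hn⟩ := hO u hu
    simp only [Complex.coe_imAddGroupHom] at h0 h1
    have hdisc : ((4 * n - t * t : ℤ) : ℝ) = (2 * u.im) ^ 2 := by
      push_cast
      rw [← hn, ← ht, Complex.normSq_apply]
      ring
    have hpos : (0 : ℝ) < (4 * n - t * t : ℤ) := by rw [hdisc]; positivity
    have hlt : ((4 * n - t * t : ℤ) : ℝ) < 1 := by rw [hdisc]; nlinarith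
    norm_cast at hpos hlt
    lia
  obtain ⟨g, hg⟩ := AddSubgroup.cyclic_of_isolated_zero one_half_pos hgap
  obtain ⟨w, hw, rfl⟩ : g ∈ O.toAddSubgroup.map Complex.imAddGroupHom :=
    hg ▸ AddSubgroup.mem_closure_singleton_self g
  refine ⟨w, hw, fun u hu => ?_⟩
  have huG : u.im ∈ O.toAddSubgroup.map Complex.imAddGroupHom := ⟨u, hu, rfl⟩
  rw [hg, AddSubgroup.mem_closure_singleton] at huG
  obtain ⟨y, hy⟩ := huG
  exact ⟨y, by rw [← hy, zsmul_eq_mul]; rfl⟩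

theorem exists_generator {O : Subring ℂ} (hO : ∀ u ∈ O, ∃ n : ℤ, Complex.normSq u = n) :
    ∃ (w : ℂ) (c e : ℤ), 1 ≤ c ∧ (e = 0 ∨ e = 1) ∧ Complex.normSq w = c ∧ 2 * w.re = e ∧
      ∀ u ∈ O, ∃ x y : ℤ, u = x + y * w := by
  obtain ⟨w, hw, him⟩ := exists_generator_im hO
  by_cases hreal : w.im = 0
  · refine ⟨Complex.I, 1, 0, le_rfl, .inl rfl, by simp, by simp, fun u hu => ?_⟩
    obtain ⟨y, hy⟩ := him u hu
    obtain ⟨x, hx⟩ := exists_int_of_im_eq_zero hO hu (by rw [hy, hreal, mul_zero])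
    exact ⟨x, 0, by simpa using hx⟩
  · obtain ⟨t, ht⟩ := exists_int_two_mul_re hO hw
    have hwO : w - (t / 2 : ℤ) ∈ O := sub_mem hw (intCast_mem O _)
    obtain ⟨c, hc⟩ := hO _ hwO
    refine ⟨w - (t / 2 : ℤ), c, t % 2, ?_, Int.emod_two_eq_zero_or_one t, hc, ?_, fun u hu => ?_⟩
    · have hne : w - (t / 2 : ℤ) ≠ 0 := fun h => hreal (by simpa using congrArg Complex.im h)
      have := Complex.normSq_pos.2 hne
      rw [hc] at this
      exact_mod_cast this
    · rw [Int.emod_def, Complex.sub_re, mul_sub, ht]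
      simp
    · obtain ⟨y, hy⟩ := him u hu
      obtain ⟨x, hx⟩ := exists_int_of_im_eq_zero hO
        (sub_mem hu (mul_mem (intCast_mem O y) hwO)) (by simp [hy])
      exact ⟨x, y, by rw [← hx]; ring⟩

theorem mul_self_eq_neg_normSq_add (w : ℂ) :
    w * w = -(Complex.normSq w : ℂ) + (2 * w.re : ℝ) * w := by
  rw [Complex.normSq_eq_conj_mul_self, ← Complex.add_conj]
  ring

theorem normSq_add_mul (x y : ℝ) (w : ℂ) :
    Complex.normSq (x + y * w) = x * x + 2 * w.re * x * y + Complex.normSq w * y * y := by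
  simp only [Complex.normSq_apply, Complex.add_re, Complex.add_im, Complex.re_ofReal_mul,
    Complex.im_ofReal_mul, Complex.ofReal_re, Complex.ofReal_im]
  ring

theorem exists_quadraticAlgebra_hom {O : Subring ℂ}
    (hO : ∀ u ∈ O, ∃ n : ℤ, Complex.normSq u = n) : ∃ c e : ℤ, 1 ≤ c ∧ (e = 0 ∨ e = 1) ∧
      ∃ G : O →+* QuadraticAlgebra ℤ (-c) e, ∀ u : O, Complex.normSq u = (G u).norm := by
  obtain ⟨w, c, e, hc, he, hwc, hwe, hrep⟩ := exists_generator hO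
  have hw : w * w = (-c) • (1 : ℂ) + e • w := by
    simpa [hwc, hwe] using mul_self_eq_neg_normSq_add w
  let F : QuadraticAlgebra ℤ (-c) e →+* ℂ := (QuadraticAlgebra.lift ⟨w, hw⟩).toRingHom
  have hF (z) : F z = z.re + z.im * w := by simp [F]
  have hnorm (z) : Complex.normSq (F z) = z.norm := by
    have h := normSq_add_mul z.re z.im w
    rw [hwc, hwe] at h
    rw [hF, QuadraticAlgebra.norm_def]
    push_cast at h ⊢
    linear_combination h
  have hinj : Function.Injective F := (injective_iff_map_eq_zero F).2 fun z hz =>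
    eq_zero_of_quadraticAlgebra_norm_eq_zero hc he (by simpa [hz] using (hnorm z).symm)
  have hOF : O ≤ F.range := fun u hu => by
    obtain ⟨x, y, rfl⟩ := hrep u hu
    exact ⟨⟨x, y⟩, hF _⟩
  let E := RingEquiv.ofBijective F.rangeRestrict
    ⟨fun _ _ h => hinj (congrArg Subtype.val h), F.rangeRestrict_surjective⟩
  refine ⟨c, e, hc, he, E.symm.toRingHom.comp (Subring.inclusion hOF), fun u => ?_⟩
  rw [← hnorm]
  exact congrArg (fun v : F.range => Complex.normSq v)
    (E.apply_symm_apply (Subring.inclusion hOF u)).symm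

theorem card_le_of_norm_lt_four {O : Subring ℂ} (hO : ∀ u ∈ O, ∃ n : ℤ, Complex.normSq u = n)
    {S : Finset O} (hS : IsDiophantine S) (h0 : ∀ u ∈ S, u ≠ 0) (h4 : ∀ u ∈ S, ‖u‖ < 4) :
    S.card ≤ 17 := by
  obtain ⟨c, e, hc, he, G, hG⟩ := exists_quadraticAlgebra_hom hO
  have hinj : Function.Injective G := (injective_iff_map_eq_zero G).2 fun u hu => by
    simpa [hu] using hG u
  have hnorm (u) (hu : u ∈ S) : (G u).norm ≤ 15 := by
    have : (((G u).norm : ℤ) : ℝ) < 16 := by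
      have hu4 : ‖(u : ℂ)‖ < 4 := h4 u hu
      rw [← hG, Complex.normSq_eq_norm_sq]
      nlinarith [norm_nonneg (u : ℂ)]
    exact Int.le_of_lt_add_one (by exact_mod_cast this)
  rw [← Finset.card_map ⟨G, hinj⟩]
  refine card_le_of_norm_le hc he (hS.map hinj) ?_ ?_ <;>
    simp only [Finset.forall_mem_map, Function.Embedding.coeFn_mk]
  · exact fun u hu => (map_ne_zero_iff G hinj).2 (h0 u hu)
  · exact hnorm

end QuadraticOrder

section ImaginaryQuadratic

theorem algebraMap_norm_eq_normSq {K : Type*} [Field K] [NumberField K] {f : K →+* ℂ}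
    (hdeg : Module.finrank ℚ K = 2) (him : ∃ w : K, (f w).im ≠ 0) (x : K) :
    ((Algebra.norm ℚ x : ℚ) : ℝ) = Complex.normSq (f x) := by
  classical
  let φ : K →ₐ[ℚ] ℂ := f.toRatAlgHom
  let ψ : K →ₐ[ℚ] ℂ := ((starRingEnd ℂ).comp f).toRatAlgHom
  have hne : φ ≠ ψ := by
    obtain ⟨w, hw⟩ := him
    exact fun h => hw (Complex.conj_eq_iff_im.1 (DFunLike.congr_fun h w).symm)
  have huniv : ({φ, ψ} : Finset (K →ₐ[ℚ] ℂ)) = Finset.univ :=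
    Finset.eq_univ_of_card _ (by rw [Finset.card_pair hne, AlgHom.card, hdeg])
  have h := Algebra.norm_eq_prod_embeddings ℚ ℂ x
  rw [← huniv, Finset.prod_pair hne, eq_ratCast] at h
  exact_mod_cast h.trans (Complex.mul_conj (f x))

theorem exists_int_normSq_eq {K : Type*} [Field K] [NumberField K] {f : K →+* ℂ}
    (hdeg : Module.finrank ℚ K = 2) (him : ∃ w : K, (f w).im ≠ 0) (u : 𝓞 K) :
    ∃ n : ℤ, Complex.normSq (f u) = n :=
  ⟨Algebra.norm ℤ u, by
    rw [← algebraMap_norm_eq_normSq hdeg him, ← Algebra.coe_norm_int, Rat.cast_intCast]⟩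

end ImaginaryQuadratic

theorem one_le_norm_of_exists_int_normSq {u : ℂ} (hu : ∃ n : ℤ, Complex.normSq u = n)
    (hu0 : u ≠ 0) : 1 ≤ ‖u‖ := by
  obtain ⟨n, hn⟩ := hu
  rw [← one_le_sq_iff₀ (norm_nonneg u), ← Complex.normSq_eq_norm_sq]
  have hpos := Complex.normSq_pos.2 hu0
  rw [hn] at hpos ⊢
  exact_mod_cast hpos

theorem card_le_of_exists_int_normSq {O : Subring ℂ}
    (hO : ∀ u ∈ O, ∃ n : ℤ, Complex.normSq u = n) {S : Finset O} (hS : IsDiophantine S)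
    (h0 : ∀ u ∈ S, u ≠ 0) : S.card ≤ 40 := by
  have hsmall : {u ∈ S | ‖u‖ < 4}.card ≤ 17 :=
    card_le_of_norm_lt_four hO (hS.mono (Finset.filter_subset _ S))
      (fun u hu => h0 u (Finset.mem_of_mem_filter u hu)) fun u hu => (Finset.mem_filter.1 hu).2
  have hlarge : {u ∈ S | ¬ ‖u‖ < 4}.card ≤ 23 :=
    card_le_of_four_le_norm
      (fun u hu => one_le_norm_of_exists_int_normSq (hO u u.2) (Subtype.coe_ne_coe.2 hu))
      (hS.mono (Finset.filter_subset _ S)) fun u hu => not_lt.1 (Finset.mem_filter.1 hu).2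
  rw [← Finset.card_filter_add_card_filter_not (‖·‖ < 4)]
  exact add_le_add hsmall hlarge

theorem stmt_19_general {R : Type*} [CommRing R] {F : R →+* ℂ} (hF : Function.Injective F)
    (hnorm : ∀ u, ∃ n : ℤ, Complex.normSq (F u) = n) {S : Finset R} (hS : IsDiophantine S)
    (h0 : ∀ u ∈ S, u ≠ 0) : S.card ≤ 40 := by
  have hinj : Function.Injective F.rangeRestrict := fun u v h => hF (congrArg Subtype.val h)
  rw [← Finset.card_map ⟨F.rangeRestrict, hinj⟩]
  have hrange : ∀ u ∈ F.range, ∃ n : ℤ, Complex.normSq u = n := by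
    rintro _ ⟨u, rfl⟩
    exact hnorm u
  refine card_le_of_exists_int_normSq hrange (hS.map hinj) ?_
  exact Finset.forall_mem_map.2 fun u hu => (map_ne_zero_iff _ hinj).2 (h0 u hu)

/-- Main theorem: there is no Diophantine `m`-tuple with `m ≥ 43` in the ring of integers
of an imaginary quadratic number field: any finite set of nonzero elements of `𝓞 K` such
that the product of any two distinct elements plus one is a square has at most 42
elements. -/
theorem stmt_19 (K : Type*) [Field K] [NumberField K]
    (hdeg : Module.finrank ℚ K = 2)
    (f : K →+* ℂ) (him : ∃ w : K, (f w).im ≠ 0)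
    (S : Finset (𝓞 K)) (h0 : ∀ u ∈ S, u ≠ 0)
    (hsq : ∀ u ∈ S, ∀ v ∈ S, u ≠ v → ∃ w : 𝓞 K, u * v + 1 = w ^ 2) :
    S.card ≤ 42 := by
  have hS : IsDiophantine S := fun u hu v hv huv =>
    (isSquare_iff_exists_sq _).2 (hsq u hu v hv huv)
  have hinj : Function.Injective (f.comp (algebraMap (𝓞 K) K)) :=
    f.injective.comp RingOfIntegers.coe_injective
  exact (stmt_19_general hinj (exists_int_normSq_eq hdeg him) hS h0).trans (by norm_num)
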